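/- arXiv:1512.01671 — 3 statements merged into one kernel-verified Lean document; each statement's English description precedes it below -/
import Mathlib

section
/- Let d ≥ 1, p ∈ (1,∞), and λ ∈ (−d, (p−1)d). Let η be a smooth nonnegative mollifier supported in B_1 with unit integral and η_ε(x) = ε^{−d}η(x/ε). Then for every f with ∫_{ℝ^d} |f(x)|^p |x|^λ dx < ∞, the mollifications f_ε = η_ε ∗ f are smooth, lie in the weighted space L^p(|x|^λ dx), and ∫_{ℝ^d} |f_ε(x) − f(x)|^p |x|^λ dx → 0 as ε → 0. -/
open MeasureTheory Filter Metric Set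
open scoped Topology ENNReal

noncomputable section

abbrev Ed (d : ℕ) := EuclideanSpace ℝ (Fin d)

/-- Truncated (away from the singularity) fractional-Laplacian integral. -/
noncomputable def fracLapTrunc (d : ℕ) (s : ℝ) (f : Ed d → ℝ) (x : Ed d) (ε : ℝ) : ℝ :=
  ∫ y in {y : Ed d | ε ≤ dist x y}, (f x - f y) / dist x y ^ ((d : ℝ) + 2 * s)

/-- Fractional Laplacian, as a principal value (limit of truncated integrals),
with normalization constant `Cds`. -/
noncomputable def fracLap (d : ℕ) (s Cds : ℝ) (f : Ed d → ℝ) (x : Ed d) : ℝ :=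
  Cds * limUnder (𝓝[>] (0:ℝ)) (fracLapTrunc d s f x)

/-- `V` is the distributional fractional Laplacian of `v`. -/
def IsDistFracLap (d : ℕ) (s Cds : ℝ) (v V : Ed d → ℝ) : Prop :=
  ∀ φ : Ed d → ℝ, ContDiff ℝ (⊤ : ℕ∞) φ → HasCompactSupport φ →
    ∫ x, v x * fracLap d s Cds φ x = ∫ x, V x * φ x

/-- The nonlocal quantity `l_{p,s}(f)(x) = ∫ |f x - f y|^p / |x-y|^{d+ps} dy`. -/
noncomputable def lps (d : ℕ) (p s : ℝ) (f : Ed d → ℝ) (x : Ed d) : ℝ :=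
  ∫ y, |f x - f y| ^ p / dist x y ^ ((d : ℝ) + p * s)

/-- A weight comparable to `|x|^{-γ₀}` on the unit ball and to `|x|^{-γ}` outside. -/
def TwoPowerWeight (d : ℕ) (ρ : Ed d → ℝ) (c C γ₀ γ : ℝ) : Prop :=
  0 < c ∧ c < C ∧
  (∀ᵐ x : Ed d, ‖x‖ ≤ 1 → c * ‖x‖ ^ (-γ₀) ≤ ρ x ∧ ρ x ≤ C * ‖x‖ ^ (-γ₀)) ∧
  (∀ᵐ x : Ed d, 1 < ‖x‖ → c * ‖x‖ ^ (-γ) ≤ ρ x ∧ ρ x ≤ C * ‖x‖ ^ (-γ))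

/-- Standard mollification `f_ε = η_ε ∗ f` with `η_ε(x) = ε^{-d} η(x/ε)`. -/
noncomputable def mollify (d : ℕ) (η : Ed d → ℝ) (ε : ℝ) (f : Ed d → ℝ) (x : Ed d) : ℝ :=
  ∫ y, (ε ^ (-(d:ℝ)) * η (ε⁻¹ • (x - y))) * f y

/-- A smooth nonnegative probability mollifier supported in the unit ball. -/
def IsMollifier (d : ℕ) (η : Ed d → ℝ) : Prop :=
  ContDiff ℝ (⊤ : ℕ∞) η ∧ (∀ x, 0 ≤ η x) ∧ tsupport η ⊆ closedBall (0 : Ed d) 1 ∧ ∫ x, η x = 1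

/-- Membership in the weighted Lebesgue space `L^p(ρ dx)`. -/
def MemWLp (d : ℕ) (p : ℝ) (ρ f : Ed d → ℝ) : Prop :=
  AEStronglyMeasurable f (volume : Measure (Ed d)) ∧
    Integrable (fun x => |f x| ^ p * ρ x)

/-- `v ∈ X_{p,s,ρ}` with distributional fractional Laplacian `V`. -/
def MemX (d : ℕ) (s Cds p : ℝ) (ρ : Ed d → ℝ) (v V : Ed d → ℝ) : Prop :=
  MemWLp d p ρ v ∧ IsDistFracLap d s Cds v V ∧
    MemWLp d (p / (p - 1)) (fun x => ρ x ^ (-(p / (p - 1) - 1))) V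

/-- Weighted `L^p` norm. -/
noncomputable def wNorm (d : ℕ) (p : ℝ) (ρ f : Ed d → ℝ) : ℝ :=
  (∫ x, |f x| ^ p * ρ x) ^ (1 / p)

/-- Norm of the space `X_{p,s,ρ}` (on the pair `(v, (−Δ)^s v)`). -/
noncomputable def xNorm (d : ℕ) (p : ℝ) (ρ : Ed d → ℝ) (v V : Ed d → ℝ) : ℝ :=
  Real.sqrt ((wNorm d p ρ v) ^ 2 +
    (wNorm d (p / (p - 1)) (fun x => ρ x ^ (-(p / (p - 1) - 1))) V) ^ 2)

/-- Riesz potential `I_{d,s} ∗ f` with kernel constant `κ`. -/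
noncomputable def riesz (d : ℕ) (s κ : ℝ) (f : Ed d → ℝ) (x : Ed d) : ℝ :=
  ∫ y, κ * ‖x - y‖ ^ (-((d:ℝ) - 2 * s)) * f y

end

lemma rpow_comparable (a s t : ℝ) (hs : 0 < s) (ht : 0 < t) (h1 : s ≤ 3 * t) (h2 : t ≤ 3 * s) :
    s ^ a ≤ 3 ^ |a| * t ^ a := by
  rcases le_total 0 a with ha | ha
  · rw [abs_of_nonneg ha, ← Real.mul_rpow (by norm_num) ht.le]
    exact Real.rpow_le_rpow hs.le h1 ha
  · rw [abs_of_nonpos ha]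
    have h3 : (3:ℝ) ^ (-a) * t ^ a = (t / 3) ^ a := by
      rw [Real.div_rpow ht.le (by norm_num), Real.rpow_neg (by norm_num)]; ring
    rw [h3]
    exact Real.rpow_le_rpow_of_nonpos (by positivity) (by linarith) ha

lemma locInt_norm_rpow (d : ℕ) (hd : 1 ≤ d) (a : ℝ) (ha : -(d:ℝ) < a) :
    LocallyIntegrable (fun x : Ed d => ‖x‖ ^ a) := by
  refine locallyIntegrable_of_norm_le_rpow (C := 1) (α := -a) (by simpa using hd)
    (by simp; linarith) ?_ ?_
  · refine Eventually.of_forall fun x => ?_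
    rw [neg_neg, one_mul, Real.norm_of_nonneg (by positivity)]
  · exact (measurable_norm.pow_const a).aestronglyMeasurable

set_option maxHeartbeats 1000000 in
lemma ball_weight_real (d : ℕ) (hd : 1 ≤ d) (a : ℝ) (ha : -(d:ℝ) < a) :
    ∃ K : ℝ, 0 ≤ K ∧ ∀ (y : Ed d) (r : ℝ), 0 < r →
      ∫ x in closedBall y r, ‖x‖ ^ a ≤ K * (r ^ d * (max ‖y‖ r) ^ a) := by
  have hli := locInt_norm_rpow d hd a ha
  have hint : ∀ (y : Ed d) (r : ℝ), IntegrableOn (fun x : Ed d => ‖x‖ ^ a) (closedBall y r) :=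
    fun y r => hli.integrableOn_isCompact (isCompact_closedBall y r)
  set J : ℝ := ∫ x in closedBall (0 : Ed d) 1, ‖x‖ ^ a with hJ
  have hJ0 : 0 ≤ J := integral_nonneg fun x => by positivity
  set V : ℝ := volume.real (closedBall (0 : Ed d) 1) with hV
  have hV0 : 0 ≤ V := measureReal_nonneg
  refine ⟨3 ^ d * 3 ^ |a| * J + 3 ^ |a| * V, by positivity, fun y r hr => ?_⟩
  have hm : 0 < max ‖y‖ r := lt_max_of_lt_right hr
  rcases le_or_gt ‖y‖ (2 * r) with hy | hy
  · have h1 : ∫ x in closedBall y r, ‖x‖ ^ a ≤ ∫ x in closedBall (0 : Ed d) (3 * r), ‖x‖ ^ a := by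
      refine setIntegral_mono_set (hint _ _) (Eventually.of_forall fun x => by positivity) ?_
      refine (closedBall_subset_closedBall' ?_).eventuallyLE
      rw [dist_zero_right]; linarith
    have h2 : ∫ x in closedBall (0 : Ed d) (3 * r), ‖x‖ ^ a = (3 * r) ^ d * ((3 * r) ^ a * J) := by
      have h := Measure.setIntegral_comp_smul (volume : Measure (Ed d))
        (fun x : Ed d => ‖x‖ ^ a) (R := 3 * r) (closedBall 0 1) (by positivity)
      rw [_root_.smul_closedBall _ _ zero_le_one] at h
      simp only [smul_zero, mul_one, finrank_euclideanSpace, Fintype.card_fin, smul_eq_mul,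
        norm_smul, Real.norm_eq_abs, abs_of_pos (show (0:ℝ) < 3 * r by positivity)] at h
      have h' : ∀ x : Ed d, (3 * r * ‖x‖) ^ a = (3 * r) ^ a * ‖x‖ ^ a := fun x =>
        Real.mul_rpow (by positivity) (by positivity)
      simp only [h', integral_const_mul] at h
      rw [← hJ, abs_of_pos (by positivity)] at h
      rw [h]
      field_simp
    have h3 : (3 * r) ^ a ≤ 3 ^ |a| * (max ‖y‖ r) ^ a := by
      apply rpow_comparable a _ _ (by positivity) hm
      · have := le_max_right ‖y‖ r; linarith
      · apply max_le <;> linarith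
    calc _ ≤ (3 * r) ^ d * ((3 * r) ^ a * J) := h1.trans h2.le
      _ ≤ (3 * r) ^ d * ((3 ^ |a| * (max ‖y‖ r) ^ a) * J) := by gcongr
      _ = (3 ^ d * 3 ^ |a| * J) * (r ^ d * (max ‖y‖ r) ^ a) := by rw [mul_pow]; ring
      _ ≤ _ := mul_le_mul_of_nonneg_right (le_add_of_nonneg_right (by positivity)) (by positivity)
  · have hmax : max ‖y‖ r = ‖y‖ := max_eq_left (by linarith)
    rw [hmax]
    have hvol : volume.real (closedBall y r) = r ^ d * V := by
      rw [hV, Measure.addHaar_real_closedBall' _ _ hr.le, finrank_euclideanSpace, Fintype.card_fin]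
    have h1 : ∫ x in closedBall y r, ‖x‖ ^ a ≤ ∫ x in closedBall y r, 3 ^ |a| * ‖y‖ ^ a := by
      refine setIntegral_mono_on (hint _ _)
        (integrableOn_const (isCompact_closedBall y r).measure_lt_top.ne)
        measurableSet_closedBall fun x hx => ?_
      have hxy : ‖x - y‖ ≤ r := by simpa [dist_eq_norm] using hx
      have hA : ‖x‖ ≤ ‖x - y‖ + ‖y‖ := by simpa using norm_add_le (x - y) y
      have hB : ‖y‖ ≤ ‖x - y‖ + ‖x‖ := by
        have := norm_sub_le x (x - y); simp at this; linarith
      exact rpow_comparable a _ _ (by linarith) (by linarith) (by linarith) (by linarith)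
    rw [setIntegral_const, hvol, smul_eq_mul] at h1
    have hnn : 0 ≤ (3 ^ d * 3 ^ |a| * J) * (r ^ d * ‖y‖ ^ a) := by
      clear_value J V
      positivity
    clear_value J V
    calc _ ≤ _ := h1
      _ = (3 ^ |a| * V) * (r ^ d * ‖y‖ ^ a) := by ring
      _ ≤ _ := by
        rw [add_mul]
        exact le_add_of_nonneg_left hnn

/-- weight as extended nonnegative function -/
noncomputable def wt (d : ℕ) (a : ℝ) (x : Ed d) : ℝ≥0∞ := ENNReal.ofReal (‖x‖ ^ a)

lemma measurable_wt (d : ℕ) (a : ℝ) : Measurable (wt d a) :=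
  (measurable_norm.pow_const a).ennreal_ofReal

lemma ball_weight (d : ℕ) (hd : 1 ≤ d) (a : ℝ) (ha : -(d:ℝ) < a) :
    ∃ K : ℝ, 0 ≤ K ∧ ∀ (y : Ed d) (r : ℝ), 0 < r →
      ∫⁻ x in closedBall y r, wt d a x ≤ ENNReal.ofReal (K * (r ^ d * (max ‖y‖ r) ^ a)) := by
  obtain ⟨K, hK, h⟩ := ball_weight_real d hd a ha
  refine ⟨K, hK, fun y r hr => ?_⟩
  unfold wt
  rw [← ofReal_integral_eq_lintegral_ofReal
    ((locInt_norm_rpow d hd a ha).integrableOn_isCompact (isCompact_closedBall y r))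
    (Eventually.of_forall fun x => by positivity)]
  exact ENNReal.ofReal_le_ofReal (h y r hr)

/-- Muckenhoupt condition for power weights on balls. -/
lemma muckenhoupt (d : ℕ) (hd : 1 ≤ d) (p lam : ℝ) (hp : 1 < p)
    (hl1 : -(d:ℝ) < lam) (hl2 : lam < (p - 1) * d) :
    ∃ K : ℝ, 0 ≤ K ∧ ∀ (y : Ed d) (r : ℝ), 0 < r →
      (∫⁻ x in closedBall y r, wt d lam x) *
        (∫⁻ x in closedBall y r, wt d (-lam / (p - 1)) x) ^ (p - 1)
        ≤ ENNReal.ofReal (K * r ^ (d * p)) := by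
  have hp1 : 0 < p - 1 := by linarith
  have hl3 : -(d:ℝ) < -lam / (p - 1) := by
    rw [lt_div_iff₀ hp1]; linarith
  obtain ⟨K₁, hK₁, h₁⟩ := ball_weight d hd lam hl1
  obtain ⟨K₂, hK₂, h₂⟩ := ball_weight d hd _ hl3
  refine ⟨K₁ * K₂ ^ (p - 1), by positivity, fun y r hr => ?_⟩
  refine (mul_le_mul' (h₁ y r hr) (ENNReal.rpow_le_rpow (h₂ y r hr) hp1.le)).trans ?_
  have hm : 0 < max ‖y‖ r := lt_max_of_lt_right hr
  rw [ENNReal.ofReal_rpow_of_nonneg (by positivity) hp1.le, ← ENNReal.ofReal_mul (by positivity)]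
  apply ENNReal.ofReal_le_ofReal
  rw [Real.mul_rpow hK₂ (by positivity), Real.mul_rpow (by positivity) (by positivity),
    ← Real.rpow_mul hm.le, div_mul_cancel₀ _ hp1.ne', ← Real.rpow_natCast r d,
    ← Real.rpow_mul hr.le]
  have e1 : max ‖y‖ r ^ lam * max ‖y‖ r ^ (-lam) = 1 := by
    rw [← Real.rpow_add hm]; simp
  have e2 : r ^ (d:ℝ) * r ^ ((d:ℝ) * (p - 1)) = r ^ (d * p) := by
    rw [← Real.rpow_add hr]; congr 1; ring
  apply le_of_eq
  rw [← e2]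
  linear_combination (K₁ * K₂ ^ (p - 1) * r ^ (d:ℝ) * r ^ ((d:ℝ) * (p - 1))) * e1

lemma wt_rpow (d : ℕ) (a t : ℝ) (ht : 0 ≤ t) (x : Ed d) : wt d a x ^ t = wt d (a * t) x := by
  unfold wt
  rw [ENNReal.ofReal_rpow_of_nonneg (by positivity) ht, ← Real.rpow_mul (norm_nonneg x)]

lemma ae_ne_zero (d : ℕ) (hd : 1 ≤ d) : ∀ᵐ x : Ed d, x ≠ 0 := by
  have : Nonempty (Fin d) := ⟨⟨0, hd⟩⟩
  exact Measure.ae_ne volume (0 : Ed d)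

lemma holder_set (d : ℕ) (hd : 1 ≤ d) (p lam : ℝ) (hp : 1 < p) (F : Ed d → ℝ≥0∞)
    (hF : AEMeasurable F) (s : Set (Ed d)) :
    (∫⁻ y in s, F y) ^ p ≤ (∫⁻ y in s, F y ^ p * wt d lam y) *
      (∫⁻ y in s, wt d (-lam / (p - 1)) y) ^ (p - 1) := by
  have hp0 : 0 < p := by linarith
  have hp1 : 0 < p - 1 := by linarith
  have hpq : p.HolderConjugate (p / (p - 1)) := Real.HolderConjugate.conjExponent hp
  have h := ENNReal.lintegral_mul_le_Lp_mul_Lq (volume.restrict s) hpq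
    (f := fun y => F y * wt d (lam / p) y) (g := fun y => wt d (-lam / p) y)
    (hF.restrict.mul (measurable_wt d _).aemeasurable) (measurable_wt d _).aemeasurable
  have e1 : ∫⁻ y in s, F y = ∫⁻ y in s, ((fun y => F y * wt d (lam / p) y) *
      (fun y => wt d (-lam / p) y)) y := by
    apply lintegral_congr_ae
    filter_upwards [ae_restrict_of_ae (ae_ne_zero d hd)] with y hy
    have hy' : 0 < ‖y‖ := norm_pos_iff.mpr hy
    simp only [Pi.mul_apply, wt]
    rw [mul_assoc, ← ENNReal.ofReal_mul (by positivity), ← Real.rpow_add hy']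
    simp [neg_div]
  have e2 : ∀ y, (F y * wt d (lam / p) y) ^ p = F y ^ p * wt d lam y := fun y => by
    rw [ENNReal.mul_rpow_of_nonneg _ _ hp0.le, wt_rpow _ _ _ hp0.le, div_mul_cancel₀ _ hp0.ne']
  have e3 : ∀ y, (wt d (-lam / p) y) ^ (p / (p - 1)) = wt d (-lam / (p - 1)) y := fun y => by
    rw [wt_rpow _ _ _ (by positivity)]
    congr 1; field_simp
  simp only [e2, e3] at h
  rw [← e1] at h
  refine (ENNReal.rpow_le_rpow h hp0.le).trans_eq ?_
  rw [ENNReal.mul_rpow_of_nonneg _ _ hp0.le, ← ENNReal.rpow_mul, ← ENNReal.rpow_mul]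
  congr 2
  · rw [one_div_mul_cancel hp0.ne', ENNReal.rpow_one]
  · field_simp

lemma measurable_ball_lintegral (d : ℕ) (a r : ℝ) :
    Measurable (fun x : Ed d => ∫⁻ y in closedBall x r, wt d a y) := by
  have hS : MeasurableSet {z : Ed d × Ed d | dist z.2 z.1 ≤ r} :=
    measurableSet_le (measurable_snd.dist measurable_fst) measurable_const
  have h := (((measurable_wt d a).comp measurable_snd).indicator hS).lintegral_prod_right'
    (ν := (volume : Measure (Ed d)))
  convert h using 2 with x
  rw [← lintegral_indicator measurableSet_closedBall]
  rfl

lemma average_bound (d : ℕ) (hd : 1 ≤ d) (p lam : ℝ) (hp : 1 < p)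
    (hl1 : -(d:ℝ) < lam) (hl2 : lam < (p - 1) * d) :
    ∃ K : ℝ, 0 ≤ K ∧ ∀ (F : Ed d → ℝ≥0∞), AEMeasurable F → ∀ (r : ℝ), 0 < r →
      ∫⁻ x, (∫⁻ y in closedBall x r, F y) ^ p * wt d lam x ≤
        ENNReal.ofReal (K * (2 * r) ^ (d * p)) * ∫⁻ x, F x ^ p * wt d lam x := by
  obtain ⟨K, hK, hA⟩ := muckenhoupt d hd p lam hp hl1 hl2
  refine ⟨K, hK, fun F hF r hr => ?_⟩
  have hp1 : 0 < p - 1 := by linarith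
  set G : Ed d → ℝ≥0∞ := fun y => F y ^ p * wt d lam y with hG
  set T : Ed d → ℝ≥0∞ := fun y => ∫⁻ z in closedBall y (2 * r), wt d (-lam / (p - 1)) z with hT
  have hGm : AEMeasurable G := (hF.pow_const p).mul (measurable_wt d _).aemeasurable
  have hTm : Measurable T := measurable_ball_lintegral d _ _
  set S : Set (Ed d × Ed d) := {z | dist z.2 z.1 ≤ r} with hS
  have hSm : MeasurableSet S :=
    measurableSet_le (measurable_snd.dist measurable_fst) measurable_const
  set H : Ed d × Ed d → ℝ≥0∞ :=
    S.indicator (fun z => G z.2 * T z.2 ^ (p - 1) * wt d lam z.1) with hH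
  have hHm : AEMeasurable H (volume.prod volume) := by
    refine AEMeasurable.indicator ?_ hSm
    refine AEMeasurable.mul (AEMeasurable.mul ?_ ?_) ?_
    · exact hGm.comp_quasiMeasurePreserving Measure.quasiMeasurePreserving_snd
    · exact ((hTm.comp measurable_snd).pow_const _).aemeasurable
    · exact ((measurable_wt d _).comp measurable_fst).aemeasurable
  calc ∫⁻ x, (∫⁻ y in closedBall x r, F y) ^ p * wt d lam x
      ≤ ∫⁻ x, ∫⁻ y, H (x, y) := by
        apply lintegral_mono
        intro x
        have h1 : ∫⁻ y, H (x, y) =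
            ∫⁻ y in closedBall x r, G y * T y ^ (p - 1) * wt d lam x := by
          rw [← lintegral_indicator measurableSet_closedBall]
          rfl
        simp only
        rw [h1]
        have hw : wt d lam x ≠ ∞ := ENNReal.ofReal_ne_top
        rw [lintegral_mul_const' _ _ hw]
        gcongr
        refine (holder_set d hd p lam hp F hF _).trans ?_
        rw [← lintegral_mul_const'' _ hGm.restrict]
        apply setLIntegral_mono_ae' measurableSet_closedBall
        refine Eventually.of_forall fun y hy => ?_
        gcongr
        refine lintegral_mono_set (closedBall_subset_closedBall' ?_)
        rw [dist_comm]
        have : dist y x ≤ r := hy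
        linarith
    _ = ∫⁻ y, ∫⁻ x, H (x, y) := lintegral_lintegral_swap hHm
    _ ≤ ∫⁻ y, ENNReal.ofReal (K * (2 * r) ^ (d * p)) * G y := by
        apply lintegral_mono
        intro y
        have h1 : ∫⁻ x, H (x, y) =
            ∫⁻ x in closedBall y r, G y * T y ^ (p - 1) * wt d lam x := by
          rw [← lintegral_indicator measurableSet_closedBall]
          congr 1
          ext x
          simp only [hH, hS, indicator, mem_ofPred_eq, mem_closedBall, dist_comm]
        simp only
        rw [h1, lintegral_const_mul _ (measurable_wt d _)]
        calc G y * T y ^ (p - 1) * ∫⁻ x in closedBall y r, wt d lam x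
            ≤ G y * T y ^ (p - 1) * ∫⁻ x in closedBall y (2 * r), wt d lam x := by
              gcongr; linarith
          _ = ((∫⁻ x in closedBall y (2 * r), wt d lam x) * T y ^ (p - 1)) * G y := by ring
          _ ≤ _ := by gcongr; exact hA y (2 * r) (by positivity)
    _ = _ := lintegral_const_mul'' _ hGm

lemma enorm_mollify_le (d : ℕ) (η : Ed d → ℝ) (M : ℝ) (hM : ∀ x, ‖η x‖ ≤ M)
    (hs : tsupport η ⊆ closedBall (0 : Ed d) 1) (f : Ed d → ℝ) (ε : ℝ) (hε : 0 < ε) (x : Ed d) :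
    ‖mollify d η ε f x‖ₑ ≤
      ENNReal.ofReal (ε ^ (-(d:ℝ)) * M) * ∫⁻ y in closedBall x ε, ‖f y‖ₑ := by
  unfold mollify
  refine (enorm_integral_le_lintegral_enorm _).trans ?_
  rw [← lintegral_const_mul' _ _ ENNReal.ofReal_ne_top,
    ← lintegral_indicator measurableSet_closedBall]
  apply lintegral_mono
  intro y
  simp only [indicator]
  split_ifs with hy
  · rw [enorm_mul]
    gcongr
    rw [← ofReal_norm]
    apply ENNReal.ofReal_le_ofReal
    rw [norm_mul, Real.norm_of_nonneg (by positivity)]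
    gcongr
    exact hM _
  · have : η (ε⁻¹ • (x - y)) = 0 := by
      by_contra hne
      have := hs (subset_tsupport η hne)
      apply hy
      rw [mem_closedBall_zero_iff, norm_smul, norm_inv, Real.norm_of_nonneg hε.le,
        inv_mul_le_iff₀ hε, mul_one] at this
      rwa [mem_closedBall, dist_comm, dist_eq_norm]
    simp [this]

lemma mollify_bound (d : ℕ) (hd : 1 ≤ d) (p lam : ℝ) (hp : 1 < p)
    (hl1 : -(d:ℝ) < lam) (hl2 : lam < (p - 1) * d)
    (η : Ed d → ℝ) (hη : IsMollifier d η) :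
    ∃ C : ℝ≥0∞, C ≠ ∞ ∧ ∀ (f : Ed d → ℝ), AEStronglyMeasurable f → ∀ (ε : ℝ), 0 < ε →
      ∫⁻ x, ‖mollify d η ε f x‖ₑ ^ p * wt d lam x ≤ C * ∫⁻ x, ‖f x‖ₑ ^ p * wt d lam x := by
  obtain ⟨K, hK, hA⟩ := average_bound d hd p lam hp hl1 hl2
  have hcs : HasCompactSupport η :=
    (isCompact_closedBall (0 : Ed d) 1).of_isClosed_subset (isClosed_tsupport η) hη.2.2.1
  obtain ⟨M, hM⟩ := hcs.exists_bound_of_continuous hη.1.continuous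
  have hM0 : 0 ≤ M := (norm_nonneg _).trans (hM 0)
  refine ⟨ENNReal.ofReal (M ^ p * (K * 2 ^ (d * p))), ENNReal.ofReal_ne_top, fun f hf ε hε => ?_⟩
  have hp0 : 0 < p := by linarith
  calc ∫⁻ x, ‖mollify d η ε f x‖ₑ ^ p * wt d lam x
      ≤ ∫⁻ x, ENNReal.ofReal (ε ^ (-(d:ℝ)) * M) ^ p *
          ((∫⁻ y in closedBall x ε, ‖f y‖ₑ) ^ p * wt d lam x) := by
        apply lintegral_mono
        intro x
        simp only
        rw [← mul_assoc, ← ENNReal.mul_rpow_of_nonneg _ _ hp0.le]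
        gcongr
        exact enorm_mollify_le d η M hM hη.2.2.1 f ε hε x
    _ = ENNReal.ofReal (ε ^ (-(d:ℝ)) * M) ^ p *
          ∫⁻ x, (∫⁻ y in closedBall x ε, ‖f y‖ₑ) ^ p * wt d lam x :=
        lintegral_const_mul' _ _ (ENNReal.rpow_ne_top_of_nonneg hp0.le ENNReal.ofReal_ne_top)
    _ ≤ ENNReal.ofReal (ε ^ (-(d:ℝ)) * M) ^ p * (ENNReal.ofReal (K * (2 * ε) ^ (d * p)) *
          ∫⁻ x, ‖f x‖ₑ ^ p * wt d lam x) := by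
        gcongr
        exact hA _ hf.enorm ε hε
    _ = _ := by
        rw [← mul_assoc, ENNReal.ofReal_rpow_of_nonneg (by positivity) hp0.le,
          ← ENNReal.ofReal_mul (by positivity)]
        congr 2
        rw [Real.mul_rpow (by positivity) hM0, Real.mul_rpow (by norm_num) hε.le,
          ← Real.rpow_mul hε.le]
        have : ε ^ (-(d:ℝ) * p) * ε ^ ((d:ℝ) * p) = 1 := by
          rw [← Real.rpow_add hε]; simp
        linear_combination (M ^ p * K * 2 ^ ((d:ℝ) * p)) * this

/-- the weighted measure -/
noncomputable def wm (d : ℕ) (a : ℝ) : Measure (Ed d) := volume.withDensity (wt d a)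

lemma lintegral_wm (d : ℕ) (a : ℝ) (G : Ed d → ℝ≥0∞) :
    ∫⁻ x, G x ∂(wm d a) = ∫⁻ x, G x * wt d a x := by
  unfold wm
  rw [lintegral_withDensity_eq_lintegral_mul_non_measurable _ (measurable_wt d a)
    (Eventually.of_forall fun x => ENNReal.ofReal_lt_top)]
  simp only [Pi.mul_apply, mul_comm]

lemma wm_closedBall_lt_top (d : ℕ) (hd : 1 ≤ d) (a : ℝ) (ha : -(d:ℝ) < a) (y : Ed d) (r : ℝ)
    (hr : 0 < r) : wm d a (closedBall y r) < ∞ := by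
  obtain ⟨K, -, h⟩ := ball_weight d hd a ha
  unfold wm
  rw [withDensity_apply _ measurableSet_closedBall]
  exact (h y r hr).trans_lt ENNReal.ofReal_lt_top

lemma wm_locFinite (d : ℕ) (hd : 1 ≤ d) (a : ℝ) (ha : -(d:ℝ) < a) :
    IsLocallyFiniteMeasure (wm d a) :=
  ⟨fun x => ⟨closedBall x 1, closedBall_mem_nhds x one_pos,
    wm_closedBall_lt_top d hd a ha x 1 one_pos⟩⟩

lemma eLpNorm_wm (d : ℕ) (a p : ℝ) (hp : 1 < p) (h : Ed d → ℝ) :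
    eLpNorm h (ENNReal.ofReal p) (wm d a) = (∫⁻ x, ‖h x‖ₑ ^ p * wt d a x) ^ (1 / p) := by
  rw [eLpNorm_eq_lintegral_rpow_enorm_toReal (by simp; linarith) ENNReal.ofReal_ne_top,
    ENNReal.toReal_ofReal (by linarith), lintegral_wm]

lemma enorm_integrand (d : ℕ) (a p : ℝ) (hp : 1 < p) (h : Ed d → ℝ) (x : Ed d) :
    ENNReal.ofReal (|h x| ^ p * ‖x‖ ^ a) = ‖h x‖ₑ ^ p * wt d a x := by
  rw [ENNReal.ofReal_mul (by positivity), ← ENNReal.ofReal_rpow_of_nonneg (abs_nonneg _)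
    (by linarith), ← Real.norm_eq_abs, ofReal_norm]
  rfl

lemma integrable_iff_wt (d : ℕ) (a p : ℝ) (hp : 1 < p) (h : Ed d → ℝ)
    (hm : AEStronglyMeasurable h) :
    Integrable (fun x : Ed d => |h x| ^ p * ‖x‖ ^ a) ↔ ∫⁻ x, ‖h x‖ₑ ^ p * wt d a x < ∞ := by
  have hm' : AEStronglyMeasurable (fun x : Ed d => |h x| ^ p * ‖x‖ ^ a) :=
    ((hm.aemeasurable.abs.pow_const p).mul
      (measurable_norm.pow_const a).aemeasurable).aestronglyMeasurable
  simp only [Integrable, hm', true_and]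
  rw [hasFiniteIntegral_iff_ofReal (Eventually.of_forall fun x => by positivity)]
  simp only [enorm_integrand d a p hp]

lemma locInt_of_weighted (d : ℕ) (hd : 1 ≤ d) (p lam : ℝ) (hp : 1 < p)
    (hl2 : lam < (p - 1) * d)
    (f : Ed d → ℝ) (hf : AEStronglyMeasurable f)
    (hfi : ∫⁻ x, ‖f x‖ₑ ^ p * wt d lam x < ∞) : LocallyIntegrable f := by
  intro x
  refine ⟨closedBall x 1, closedBall_mem_nhds x one_pos, hf.restrict, ?_⟩
  have hp1 : 0 < p - 1 := by linarith
  have hl3 : -(d:ℝ) < -lam / (p - 1) := by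
    rw [lt_div_iff₀ hp1]; linarith
  have h := holder_set d hd p lam hp (fun y => ‖f y‖ₑ) hf.enorm (closedBall x 1)
  have hfin : (∫⁻ y in closedBall x 1, ‖f y‖ₑ) ^ p < ∞ := by
    refine h.trans_lt (ENNReal.mul_lt_top ?_ ?_)
    · exact (setLIntegral_le_lintegral _ _).trans_lt hfi
    · apply ENNReal.rpow_lt_top_of_nonneg hp1.le
      obtain ⟨K, -, h⟩ := ball_weight d hd _ hl3
      exact ((h x 1 one_pos).trans_lt ENNReal.ofReal_lt_top).ne
  unfold HasFiniteIntegral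
  exact (ENNReal.rpow_lt_top_iff_of_pos (by linarith)).1 hfin

/-- scaled mollifier -/
noncomputable def sc (d : ℕ) (η : Ed d → ℝ) (ε : ℝ) (z : Ed d) : ℝ :=
  ε ^ (-(d:ℝ)) * η (ε⁻¹ • z)

lemma sc_zero (d : ℕ) (η : Ed d → ℝ) (hη : IsMollifier d η) (ε : ℝ) (hε : 0 < ε) (z : Ed d)
    (hz : ε < ‖z‖) : sc d η ε z = 0 := by
  unfold sc
  have : η (ε⁻¹ • z) = 0 := by
    by_contra hne
    have := hη.2.2.1 (subset_tsupport η hne)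
    rw [mem_closedBall_zero_iff, norm_smul, norm_inv, Real.norm_of_nonneg hε.le,
      inv_mul_le_iff₀ hε, mul_one] at this
    linarith
  rw [this, mul_zero]

lemma sc_compact (d : ℕ) (η : Ed d → ℝ) (hη : IsMollifier d η) (ε : ℝ) (hε : 0 < ε) :
    HasCompactSupport (sc d η ε) := by
  refine HasCompactSupport.intro (isCompact_closedBall (0 : Ed d) ε) fun z hz => ?_
  apply sc_zero d η hη ε hε
  simpa using hz

lemma sc_contDiff (d : ℕ) (η : Ed d → ℝ) (hη : IsMollifier d η) (ε : ℝ) :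
    ContDiff ℝ (⊤ : ℕ∞) (sc d η ε) :=
  contDiff_const.mul (hη.1.comp (contDiff_id.const_smul ε⁻¹))

lemma sc_integral (d : ℕ) (η : Ed d → ℝ) (hη : IsMollifier d η) (ε : ℝ) (hε : 0 < ε) :
    ∫ z, sc d η ε z = 1 := by
  unfold sc
  rw [integral_const_mul, Measure.integral_comp_inv_smul_of_nonneg _ _ hε.le, hη.2.2.2]
  simp only [finrank_euclideanSpace, Fintype.card_fin, smul_eq_mul, mul_one]
  rw [← Real.rpow_natCast, ← Real.rpow_add hε]
  simp

lemma mollify_eq (d : ℕ) (η : Ed d → ℝ) (ε : ℝ) (f : Ed d → ℝ) :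
    mollify d η ε f = convolution f (sc d η ε) (ContinuousLinearMap.mul ℝ ℝ) volume := by
  ext x
  simp only [mollify, convolution, sc, ContinuousLinearMap.mul_apply', mul_comm]

lemma mollify_eq' (d : ℕ) (η : Ed d → ℝ) (ε : ℝ) (f : Ed d → ℝ) :
    mollify d η ε f = convolution (sc d η ε) f (ContinuousLinearMap.lsmul ℝ ℝ) volume := by
  ext x
  rw [convolution_lsmul_swap]
  rfl

lemma mollify_contDiff (d : ℕ) (η : Ed d → ℝ) (hη : IsMollifier d η) (ε : ℝ) (hε : 0 < ε)
    (f : Ed d → ℝ) (hf : LocallyIntegrable f) :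
    ContDiff ℝ (⊤ : ℕ∞) (mollify d η ε f) := by
  rw [mollify_eq]
  exact (sc_compact d η hη ε hε).contDiff_convolution_right _ hf (sc_contDiff d η hη ε)

lemma mollify_sub (d : ℕ) (η : Ed d → ℝ) (hη : IsMollifier d η) (ε : ℝ) (hε : 0 < ε)
    (f g : Ed d → ℝ) (hf : LocallyIntegrable f) (hg : LocallyIntegrable g) :
    mollify d η ε (f - g) = mollify d η ε f - mollify d η ε g := by
  have key : ∀ h : Ed d → ℝ, LocallyIntegrable h → ∀ x,
      Integrable (fun y => (ε ^ (-(d:ℝ)) * η (ε⁻¹ • (x - y))) * h y) := by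
    intro h hh x
    have := (sc_compact d η hη ε hε).convolutionExists_right (ContinuousLinearMap.mul ℝ ℝ) hh
      (sc_contDiff d η hη ε).continuous x
    simpa only [ConvolutionExistsAt, ContinuousLinearMap.mul_apply', sc, mul_comm] using this
  ext x
  simp only [mollify, Pi.sub_apply, mul_sub]
  exact integral_sub (key f hf x) (key g hg x)

lemma mollify_tendsto_cc (d : ℕ) (hd : 1 ≤ d) (p lam : ℝ) (hp : 1 < p)
    (hl1 : -(d:ℝ) < lam) (η : Ed d → ℝ) (hη : IsMollifier d η)
    (g : Ed d → ℝ) (hg : Continuous g) (hgs : HasCompactSupport g) :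
    Tendsto (fun ε : ℝ => eLpNorm (mollify d η ε g - g) (ENNReal.ofReal p) (wm d lam))
      (𝓝[>] (0:ℝ)) (𝓝 0) := by
  obtain ⟨R, hR0, hR⟩ := hgs.isCompact.isBounded.exists_pos_norm_le
  have hgz : ∀ y : Ed d, R < ‖y‖ → g y = 0 := fun y hy => by
    by_contra hne
    exact absurd (hR y (subset_tsupport g hne)) (not_le.2 hy)
  set B : Set (Ed d) := closedBall 0 (R + 1) with hB
  set c : ℝ≥0∞ := (wm d lam).restrict B univ ^ (ENNReal.ofReal p).toReal⁻¹ with hc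
  have hctop : c ≠ ∞ := by
    apply ENNReal.rpow_ne_top_of_nonneg (by positivity)
    rw [Measure.restrict_apply_univ]
    exact (wm_closedBall_lt_top d hd lam hl1 0 (R + 1) (by positivity)).ne
  have huc := hgs.uniformContinuous_of_continuous hg
  rw [Metric.uniformContinuous_iff] at huc
  -- quantitative bound
  have key : ∀ δ : ℝ, 0 < δ → ∀ᶠ ε in 𝓝[>] (0:ℝ),
      eLpNorm (mollify d η ε g - g) (ENNReal.ofReal p) (wm d lam) ≤ c * ENNReal.ofReal δ := by
    intro δ hδ
    obtain ⟨r, hr, hgr⟩ := huc δ hδ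
    have hev : ∀ᶠ ε in 𝓝[>] (0:ℝ), ε ∈ Ioo (0:ℝ) (min 1 (r / 2)) :=
      Ioo_mem_nhdsGT (by positivity)
    filter_upwards [hev] with ε hε
    have hε0 : 0 < ε := hε.1
    have hε1 : ε < 1 := hε.2.trans_le (min_le_left _ _)
    have hε2 : ε < r / 2 := hε.2.trans_le (min_le_right _ _)
    have hsupp : Function.support (mollify d η ε g - g) ⊆ B := by
      intro x hx
      by_contra hxB
      have hxn : R + 1 < ‖x‖ := by simpa [hB] using hxB
      apply hx
      have h1 : mollify d η ε g x = 0 := by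
        unfold mollify
        rw [← integral_zero (Ed d) ℝ]
        congr 1
        ext y
        rcases lt_or_ge R ‖y‖ with hy | hy
        · rw [hgz y hy, mul_zero]
        · have : sc d η ε (x - y) = 0 := by
            apply sc_zero d η hη ε hε0
            have := norm_sub_norm_le x y
            linarith
          unfold sc at this
          rw [this, zero_mul]
      simp [h1, hgz x (by linarith)]
    have hbd : ∀ x, ‖(mollify d η ε g - g) x‖ ≤ δ := by
      intro x
      rw [Pi.sub_apply, ← dist_eq_norm, mollify_eq']
      refine dist_convolution_le (R := 2 * ε) hδ.le ?_ ?_ (sc_integral d η hη ε hε0)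
        hg.aestronglyMeasurable ?_
      · intro z hz
        rw [mem_ball_zero_iff]
        by_contra hcon
        exact hz (sc_zero d η hη ε hε0 z (by linarith))
      · intro z
        exact mul_nonneg (by positivity) (hη.2.1 _)
      · intro z hz
        exact (hgr (lt_trans (mem_ball.1 hz) (by linarith))).le
    rw [← eLpNorm_restrict_eq_of_support_subset hsupp]
    exact eLpNorm_le_of_ae_bound (Eventually.of_forall hbd)
  rw [ENNReal.tendsto_nhds_zero]
  intro τ hτ
  have hlim : Tendsto (fun δ : ℝ => c * ENNReal.ofReal δ) (𝓝[>] (0:ℝ)) (𝓝 0) := by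
    have : Tendsto (fun δ : ℝ => c * ENNReal.ofReal δ) (𝓝 0) (𝓝 (c * ENNReal.ofReal 0)) :=
      ENNReal.Tendsto.const_mul (ENNReal.tendsto_ofReal tendsto_id) (Or.inr hctop)
    simp only [ENNReal.ofReal_zero, mul_zero] at this
    exact this.mono_left nhdsWithin_le_nhds
  obtain ⟨δ, hδ1, hδ2⟩ :=
    ((ENNReal.tendsto_nhds_zero.1 hlim τ hτ).and self_mem_nhdsWithin).exists
  filter_upwards [key δ hδ2] with ε h
  exact h.trans hδ1

theorem stmt2 (d : ℕ) (hd : 1 ≤ d) (p lam : ℝ) (hp : 1 < p)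
    (hl1 : -(d:ℝ) < lam) (hl2 : lam < (p - 1) * d)
    (η : Ed d → ℝ) (hη : IsMollifier d η)
    (f : Ed d → ℝ) (hf : AEStronglyMeasurable f (volume : Measure (Ed d)))
    (hfi : Integrable (fun x : Ed d => |f x| ^ p * ‖x‖ ^ lam)) :
    (∀ ε > (0:ℝ), ContDiff ℝ (⊤ : ℕ∞) (mollify d η ε f) ∧
      Integrable (fun x : Ed d => |mollify d η ε f x| ^ p * ‖x‖ ^ lam)) ∧
    Tendsto (fun ε : ℝ => ∫ x : Ed d, |mollify d η ε f x - f x| ^ p * ‖x‖ ^ lam)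
      (𝓝[>] (0:ℝ)) (𝓝 0) := by
  have hp0 : 0 < p := by linarith
  have hW : ∫⁻ x, ‖f x‖ₑ ^ p * wt d lam x < ∞ := (integrable_iff_wt d lam p hp f hf).1 hfi
  have hloc : LocallyIntegrable f := locInt_of_weighted d hd p lam hp hl2 f hf hW
  obtain ⟨C, hC, hbound⟩ := mollify_bound d hd p lam hp hl1 hl2 η hη
  refine ⟨fun ε hε => ⟨mollify_contDiff d η hη ε hε f hloc, ?_⟩, ?_⟩
  · rw [integrable_iff_wt d lam p hp _
      (mollify_contDiff d η hη ε hε f hloc).continuous.aestronglyMeasurable]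
    exact (hbound f hf ε hε).trans_lt (ENNReal.mul_lt_top hC.lt_top hW)
  have := wm_locFinite d hd lam hl1
  have hac : wm d lam ≪ volume := withDensity_absolutelyContinuous _ _
  have hpE : (1 : ℝ≥0∞) ≤ ENNReal.ofReal p := by simpa using hp.le
  have hmem : MemLp f (ENNReal.ofReal p) (wm d lam) := by
    refine ⟨hf.mono_ac hac, ?_⟩
    rw [eLpNorm_wm d lam p hp]
    exact ENNReal.rpow_lt_top_of_nonneg (by positivity) hW.ne
  set C' : ℝ≥0∞ := C ^ (1 / p) with hC'
  have hC'top : C' ≠ ∞ := ENNReal.rpow_ne_top_of_nonneg (by positivity) hC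
  have hbound' : ∀ (h : Ed d → ℝ), AEStronglyMeasurable h → ∀ ε : ℝ, 0 < ε →
      eLpNorm (mollify d η ε h) (ENNReal.ofReal p) (wm d lam) ≤
        C' * eLpNorm h (ENNReal.ofReal p) (wm d lam) := by
    intro h hh ε hε
    rw [eLpNorm_wm d lam p hp, eLpNorm_wm d lam p hp, hC',
      ← ENNReal.mul_rpow_of_nonneg _ _ (by positivity)]
    exact ENNReal.rpow_le_rpow (hbound h hh ε hε) (by positivity)
  have hlim : Tendsto (fun ε : ℝ => eLpNorm (mollify d η ε f - f) (ENNReal.ofReal p) (wm d lam))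
      (𝓝[>] (0:ℝ)) (𝓝 0) := by
    rw [ENNReal.tendsto_nhds_zero]
    intro τ hτ
    have hl : Tendsto (fun t : ℝ≥0∞ => C' * t + t + t) (𝓝[>] 0) (𝓝 0) := by
      have h1 : Tendsto (fun t : ℝ≥0∞ => C' * t + t + t) (𝓝 0) (𝓝 (C' * 0 + 0 + 0)) :=
        ((ENNReal.Tendsto.const_mul tendsto_id (Or.inr hC'top)).add tendsto_id).add tendsto_id
      simp only [mul_zero, add_zero] at h1
      exact h1.mono_left nhdsWithin_le_nhds
    obtain ⟨t, ht1, ht2⟩ :=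
      ((ENNReal.tendsto_nhds_zero.1 hl τ hτ).and self_mem_nhdsWithin).exists
    have ht0 : 0 < t := ht2
    obtain ⟨g, hgs, hgt, hgc, -⟩ :=
      hmem.exists_hasCompactSupport_eLpNorm_sub_le ENNReal.ofReal_ne_top ht0.ne'
    have hgl : LocallyIntegrable g := hgc.locallyIntegrable
    have hcc := ENNReal.tendsto_nhds_zero.1
      (mollify_tendsto_cc d hd p lam hp hl1 η hη g hgc hgs) t ht0
    filter_upwards [hcc, self_mem_nhdsWithin] with ε h1 h2
    have hε : 0 < ε := h2
    have hdec : mollify d η ε f - f =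
        (mollify d η ε (f - g) + (mollify d η ε g - g)) + (g - f) := by
      rw [mollify_sub d η hη ε hε f g hloc hgl]; abel
    have hfg : LocallyIntegrable (f - g) := hloc.sub hgl
    have hm1 : AEStronglyMeasurable (mollify d η ε (f - g)) (wm d lam) :=
      (mollify_contDiff d η hη ε hε _ hfg).continuous.aestronglyMeasurable
    have hm2 : AEStronglyMeasurable (mollify d η ε g - g) (wm d lam) :=
      ((mollify_contDiff d η hη ε hε _ hgl).continuous.sub hgc).aestronglyMeasurable
    have hm3 : AEStronglyMeasurable (g - f) (wm d lam) :=
      hgc.aestronglyMeasurable.sub hmem.1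
    rw [hdec]
    refine (eLpNorm_add_le (hm1.add hm2) hm3 hpE).trans ?_
    refine le_trans ?_ ht1
    refine add_le_add ((eLpNorm_add_le hm1 hm2 hpE).trans (add_le_add ?_ h1)) ?_
    · refine (hbound' (f - g) (hf.sub hgc.aestronglyMeasurable) ε hε).trans ?_
      gcongr
    · rwa [eLpNorm_sub_comm]
  have hfin : Tendsto (fun ε : ℝ => (eLpNorm (mollify d η ε f - f) (ENNReal.ofReal p)
      (wm d lam)).toReal ^ p) (𝓝[>] (0:ℝ)) (𝓝 0) := by
    have h1 := (ENNReal.tendsto_toReal ENNReal.zero_ne_top).comp hlim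
    have h2 := h1.rpow_const (p := p) (Or.inr hp0.le)
    simpa [Real.zero_rpow hp0.ne'] using h2
  refine hfin.congr' ?_
  filter_upwards [self_mem_nhdsWithin] with ε h2
  have hε : 0 < ε := h2
  have hm : AEStronglyMeasurable (mollify d η ε f - f) :=
    (mollify_contDiff d η hη ε hε f hloc).continuous.aestronglyMeasurable.sub hf
  have hm' : AEStronglyMeasurable (fun x : Ed d => |(mollify d η ε f - f) x| ^ p * ‖x‖ ^ lam) :=
    ((hm.aemeasurable.abs.pow_const p).mul
      (measurable_norm.pow_const lam).aemeasurable).aestronglyMeasurable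
  have hint := integral_eq_lintegral_of_nonneg_ae (Eventually.of_forall fun x => by
    show 0 ≤ |(mollify d η ε f - f) x| ^ p * ‖x‖ ^ lam
    positivity) hm'
  simp only [enorm_integrand d lam p hp] at hint
  simp only [Pi.sub_apply] at hint
  rw [hint, eLpNorm_wm d lam p hp, ENNReal.toReal_rpow, ← ENNReal.rpow_mul,
    one_div_mul_cancel hp0.ne', ENNReal.rpow_one]
  rfl
end

section
/- Let d ≥ 1, s ∈ (0,1), p ∈ (1,∞), and Λ ≥ −d − ps. Suppose v ∈ C^∞(ℝ^d) satisfies ∫_{|y|>1} |v(y)|^p |y|^Λ dy < ∞. Then the classical fractional Laplacian (−Δ)^s v(x) = C_{d,s} p.v. ∫_{ℝ^d} (v(x)−v(y))/|x−y|^{d+2s} dy is well defined and continuous on ℝ^d, and it coincides with the distributional fractional Laplacian of v: for all φ ∈ C_c^∞(ℝ^d), ∫_{ℝ^d} v(x) (−Δ)^s φ(x) dx = ∫_{ℝ^d} (−Δ)^s v(x) φ(x) dx. -/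
open MeasureTheory Filter Metric Set
open scoped Topology ENNReal

noncomputable section

def trKer (d : ℕ) (α ε : ℝ) (z : Ed d) : ℝ := {z : Ed d | ε ≤ ‖z‖}.indicator (fun z => ‖z‖ ^ (-α)) z

def modG (d : ℕ) (α ε : ℝ) : ℝ := ∫ h in ball (0 : Ed d) ε, ‖h‖ ^ 2 * ‖h‖ ^ (-α)

def limL (d : ℕ) (s : ℝ) (f : Ed d → ℝ) (x : Ed d) : ℝ :=
  (1 / 2) * ∫ h, (2 * f x - f (x + h) - f (x - h)) * trKer d ((d : ℝ) + 2 * s) 0 h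

lemma young_weight (d : ℕ) (s : ℝ) (hs : s ∈ Set.Ioo (0:ℝ) 1)
    (p Λ : ℝ) (hp : 1 < p) (hΛ : -(d:ℝ) - p * s ≤ Λ)
    (v : Ed d → ℝ) (hv : Continuous v)
    (hvi : IntegrableOn (fun y : Ed d => |v y| ^ p * ‖y‖ ^ Λ) {y : Ed d | 1 < ‖y‖}) :
    Integrable (fun y => v y * (1 + ‖y‖) ^ (-((d : ℝ) + 2 * s))) := by
  obtain ⟨hs0, hs1⟩ := hs
  have hWc : Continuous fun y : Ed d => v y * (1 + ‖y‖) ^ (-((d : ℝ) + 2 * s)) := by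
    refine hv.mul ?_
    refine Continuous.rpow_const (by fun_prop) (fun x => Or.inl ?_)
    positivity
  have h1 : IntegrableOn (fun y => v y * (1 + ‖y‖) ^ (-((d : ℝ) + 2 * s))) (closedBall (0 : Ed d) 1) :=
    hWc.continuousOn.integrableOn_compact (isCompact_closedBall _ _)
  have hU : closedBall (0 : Ed d) 1 ∪ {y : Ed d | 1 < ‖y‖} = univ := by
    ext y; simp [le_or_gt]
  rw [← integrableOn_univ, ← hU]
  refine h1.union ?_
  set q := Real.conjExponent p with hq
  have hpq : p.HolderConjugate q := Real.HolderConjugate.conjExponent hp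
  have hJ : Integrable (fun y : Ed d => (1 + ‖y‖) ^ (-((d : ℝ) + s))) :=
    integrable_one_add_norm (by simp; linarith)
  have hB := (hvi.div_const p).add (((hJ.const_mul ((2 : ℝ) ^ ((d : ℝ) + s))).div_const q).integrableOn
    (s := {y : Ed d | 1 < ‖y‖}))
  refine Integrable.mono' hB hWc.aestronglyMeasurable.restrict ?_
  refine (ae_restrict_iff' ?_).2 (Eventually.of_forall ?_)
  · exact (isOpen_lt continuous_const continuous_norm).measurableSet
  intro y hy
  have hy1 : 1 < ‖y‖ := hy
  have hy0 : 0 < ‖y‖ := by linarith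
  have hqp := hpq.symm.pos
  have hp0 := hpq.pos
  have hinv := hpq.inv_add_inv_eq_one
  have hq1 : 1 < q := hpq.symm.lt
  have key := Real.young_inequality_of_nonneg (a := |v y| * ‖y‖ ^ (Λ / p))
    (b := ‖y‖ ^ (-((d : ℝ) + 2 * s)) * ‖y‖ ^ (-(Λ / p))) (by positivity) (by positivity) hpq
  have e1 : (|v y| * ‖y‖ ^ (Λ / p)) ^ p = |v y| ^ p * ‖y‖ ^ Λ := by
    rw [Real.mul_rpow (by positivity) (by positivity), ← Real.rpow_mul hy0.le]
    congr 2; field_simp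
  have e2 : (‖y‖ ^ (-((d : ℝ) + 2 * s)) * ‖y‖ ^ (-(Λ / p))) ^ q ≤
      (2 : ℝ) ^ ((d : ℝ) + s) * (1 + ‖y‖) ^ (-((d : ℝ) + s)) := by
    rw [← Real.rpow_add hy0, ← Real.rpow_mul hy0.le]
    calc ‖y‖ ^ ((-((d : ℝ) + 2 * s) + -(Λ / p)) * q) ≤ ‖y‖ ^ (-((d : ℝ) + s)) := by
          apply Real.rpow_le_rpow_of_exponent_le hy1.le
          have : -(d:ℝ) * p⁻¹ - s ≤ Λ / p := by
            rw [le_div_iff₀ hp0]; field_simp; linarith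
          have h2 : (-((d : ℝ) + 2 * s) + -(Λ / p)) ≤ - (d * q⁻¹) - s := by
            have : q⁻¹ = 1 - p⁻¹ := by linarith
            rw [this]; linarith
          have h3 := mul_le_mul_of_nonneg_right h2 hqp.le
          have h4 : (- (d * q⁻¹) - s) * q = - d - s * q := by field_simp
          nlinarith
      _ ≤ ((1 + ‖y‖) / 2) ^ (-((d : ℝ) + s)) := by
          apply Real.rpow_le_rpow_of_nonpos (by positivity) (by linarith)
          have : (0:ℝ) ≤ d := by positivity
          linarith
      _ = _ := by
          rw [Real.div_rpow (by positivity) (by positivity), Real.rpow_neg (by norm_num : (0:ℝ) ≤ 2)]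
          field_simp
  have e3 : |v y| * ‖y‖ ^ (Λ / p) * (‖y‖ ^ (-((d : ℝ) + 2 * s)) * ‖y‖ ^ (-(Λ / p)))
      = |v y| * ‖y‖ ^ (-((d : ℝ) + 2 * s)) := by
    rw [Real.rpow_neg hy0.le (Λ / p)]; field_simp
  have e4 : (1 + ‖y‖) ^ (-((d : ℝ) + 2 * s)) ≤ ‖y‖ ^ (-((d : ℝ) + 2 * s)) := by
    apply Real.rpow_le_rpow_of_nonpos hy0 (by linarith)
    have : (0:ℝ) ≤ d := by positivity
    linarith
  rw [e1, e3] at key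
  have : ‖v y * (1 + ‖y‖) ^ (-((d : ℝ) + 2 * s))‖ = |v y| * (1 + ‖y‖) ^ (-((d : ℝ) + 2 * s)) := by
    rw [norm_mul, Real.norm_eq_abs, Real.norm_of_nonneg (by positivity)]
  rw [this]
  refine (mul_le_mul_of_nonneg_left e4 (abs_nonneg _)).trans (key.trans ?_)
  simp only [Pi.add_apply]
  gcongr

lemma trKer_le (d : ℕ) {α ε : ℝ} (hα : 0 ≤ α) (hε : 0 < ε) (x y : Ed d) :
    trKer d α ε (x - y) ≤ ((1 + ‖x‖) * (1 + ε⁻¹)) ^ α * (1 + ‖y‖) ^ (-α) := by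
  unfold trKer
  by_cases h : ε ≤ ‖x - y‖
  · rw [indicator_of_mem (by exact h)]
    have h0 : 0 < ‖x - y‖ := by linarith
    have h1 : ‖y‖ ≤ ‖x‖ + ‖x - y‖ := by
      have := norm_sub_le x (x - y); simpa using this
    have h2 : 1 ≤ ε⁻¹ * ‖x - y‖ := by
      rw [inv_mul_eq_div, le_div_iff₀ hε]; linarith
    have h3 : 1 + ‖y‖ ≤ ((1 + ‖x‖) * (1 + ε⁻¹)) * ‖x - y‖ := by
      have := norm_nonneg x
      nlinarith
    have hc : 0 < (1 + ‖x‖) * (1 + ε⁻¹) := by positivity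
    have h4 : (1 + ‖y‖) / ((1 + ‖x‖) * (1 + ε⁻¹)) ≤ ‖x - y‖ := by
      rw [div_le_iff₀ hc]; linarith
    calc ‖x - y‖ ^ (-α) ≤ ((1 + ‖y‖) / ((1 + ‖x‖) * (1 + ε⁻¹))) ^ (-α) :=
          Real.rpow_le_rpow_of_nonpos (by positivity) h4 (by linarith)
      _ = _ := by
          rw [Real.div_rpow (by positivity) (by positivity), Real.rpow_neg hc.le]
          field_simp
  · rw [indicator_of_notMem (by exact h)]; positivity

lemma trKer_nonneg (d : ℕ) (α ε : ℝ) (z : Ed d) : 0 ≤ trKer d α ε z :=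
  indicator_nonneg (fun _ _ => by positivity) _

lemma trKer_neg (d : ℕ) (α ε : ℝ) (z : Ed d) : trKer d α ε (-z) = trKer d α ε z := by
  simp [trKer, indicator]

lemma trKer_symm (d : ℕ) (α ε : ℝ) (x y : Ed d) : trKer d α ε (x - y) = trKer d α ε (y - x) := by
  rw [← trKer_neg, neg_sub]

lemma measurable_trKer (d : ℕ) (α ε : ℝ) : Measurable (trKer d α ε) := by
  unfold trKer
  exact Measurable.indicator (by fun_prop) (isClosed_le continuous_const continuous_norm).measurableSet

lemma integrable_mul_trKer (d : ℕ) {α ε : ℝ} (hα : 0 ≤ α) (hε : 0 < ε) (f : Ed d → ℝ)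
    (hf : Integrable (fun y => f y * (1 + ‖y‖) ^ (-α))) (hc : Continuous f) (x : Ed d) :
    Integrable (fun y => f y * trKer d α ε (x - y)) := by
  refine Integrable.mono' (hf.norm.const_mul (((1 + ‖x‖) * (1 + ε⁻¹)) ^ α)) ?_ ?_
  · exact (hc.measurable.mul ((measurable_trKer d α ε).comp (by fun_prop))).aestronglyMeasurable
  · refine Eventually.of_forall fun y => ?_
    simp only [norm_mul]
    rw [Real.norm_of_nonneg (trKer_nonneg _ _ _ _),
      Real.norm_of_nonneg (show 0 ≤ (1 + ‖y‖) ^ (-α) by positivity)]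
    have := mul_le_mul_of_nonneg_left (trKer_le d hα hε x y) (norm_nonneg (f y))
    linarith

lemma integrable_trKer (d : ℕ) {α ε : ℝ} (hα : (d : ℝ) < α) (hε : 0 < ε) :
    Integrable (trKer d α ε) := by
  have hα0 : 0 ≤ α := by
    have : (0:ℝ) ≤ d := by positivity
    linarith
  have := integrable_mul_trKer d hα0 hε (fun _ => 1)
    (by simpa using integrable_one_add_norm (by simpa using hα)) continuous_const 0
  simpa [trKer_neg] using this

lemma trunc_eq (d : ℕ) (s ε : ℝ) (f : Ed d → ℝ) (x : Ed d) :
    fracLapTrunc d s f x ε = ∫ y, (f x - f y) * trKer d ((d : ℝ) + 2 * s) ε (x - y) := by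
  unfold fracLapTrunc
  rw [← integral_indicator (isClosed_le continuous_const (by fun_prop)).measurableSet]
  congr 1
  ext y
  simp only [trKer, indicator, mem_ofPred_eq, dist_eq_norm]
  split_ifs
  · rw [Real.rpow_neg (norm_nonneg _)]; rfl
  · simp

lemma integrable_diff (d : ℕ) {s ε : ℝ} (hs : 0 < s) (hε : 0 < ε) (f : Ed d → ℝ)
    (hf : Integrable (fun y => f y * (1 + ‖y‖) ^ (-((d : ℝ) + 2 * s)))) (hc : Continuous f) (x : Ed d) :
    Integrable (fun y => (f x - f y) * trKer d ((d : ℝ) + 2 * s) ε (x - y)) := by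
  have hα0 : 0 ≤ (d : ℝ) + 2 * s := by positivity
  have h1 := ((integrable_trKer d (α := (d : ℝ) + 2 * s) (by linarith) hε).comp_sub_left x).const_mul (f x)
  have h2 := integrable_mul_trKer d hα0 hε f hf hc x
  refine (h1.sub h2).congr (Eventually.of_forall fun y => ?_)
  simp only [Pi.sub_apply]; ring

lemma trunc_split (d : ℕ) {s ε : ℝ} (hs : 0 < s) (hε : 0 < ε) (f : Ed d → ℝ)
    (hf : Integrable (fun y => f y * (1 + ‖y‖) ^ (-((d : ℝ) + 2 * s)))) (hc : Continuous f) (x : Ed d) :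
    fracLapTrunc d s f x ε = f x * (∫ z, trKer d ((d : ℝ) + 2 * s) ε z)
      - ∫ y, f y * trKer d ((d : ℝ) + 2 * s) ε (x - y) := by
  have hα0 : 0 ≤ (d : ℝ) + 2 * s := by positivity
  have h1 := ((integrable_trKer d (α := (d : ℝ) + 2 * s) (by linarith) hε).comp_sub_left x).const_mul (f x)
  have h2 := integrable_mul_trKer d hα0 hε f hf hc x
  rw [trunc_eq, ← integral_sub_left_eq_self (trKer d ((d : ℝ) + 2 * s) ε) volume x, ← integral_const_mul, ← integral_sub h1 h2]
  congr 1; ext y; ring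

lemma trunc_symm (d : ℕ) {s ε : ℝ} (hs : 0 < s) (hε : 0 < ε) (f : Ed d → ℝ)
    (hf : Integrable (fun y => f y * (1 + ‖y‖) ^ (-((d : ℝ) + 2 * s)))) (hc : Continuous f) (x : Ed d) :
    Integrable (fun h => (2 * f x - f (x + h) - f (x - h)) * trKer d ((d : ℝ) + 2 * s) ε h) ∧
    fracLapTrunc d s f x ε =
      (1 / 2) * ∫ h, (2 * f x - f (x + h) - f (x - h)) * trKer d ((d : ℝ) + 2 * s) ε h := by
  set g : Ed d → ℝ := fun h => (f x - f (x - h)) * trKer d ((d : ℝ) + 2 * s) ε h with hg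
  have hgi : Integrable g := by
    have := (integrable_diff d hs hε f hf hc x).comp_sub_left x
    simpa [hg] using this
  have hgn : Integrable (fun h => g (-h)) := hgi.comp_neg
  have e : (fun h => (2 * f x - f (x + h) - f (x - h)) * trKer d ((d : ℝ) + 2 * s) ε h)
      = fun h => g h + g (-h) := by
    ext h; simp only [hg, trKer_neg, sub_neg_eq_add]; ring
  rw [e]
  refine ⟨hgi.add hgn, ?_⟩
  rw [integral_add hgi hgn, integral_neg_eq_self g volume, trunc_eq,
    ← integral_sub_left_eq_self g volume x]
  simp only [hg, sub_sub_cancel]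
  ring

lemma continuous_norm_fderiv1 {E F : Type*} [NormedAddCommGroup E] [NormedSpace ℝ E]
    [NormedAddCommGroup F] [NormedSpace ℝ F] (g : E → F)
    (hg : ContDiff ℝ 1 g) : Continuous (fun z => ‖fderiv ℝ g z‖) :=
  (hg.continuous_fderiv (by norm_num)).norm

lemma second_diff (d : ℕ) (f : Ed d → ℝ) (hf : ContDiff ℝ (⊤ : ℕ∞) f) (R : ℝ) :
    ∃ M : ℝ, 0 ≤ M ∧ ∀ x h : Ed d, ‖x‖ ≤ R → ‖h‖ ≤ 1 →
      |2 * f x - f (x + h) - f (x - h)| ≤ M * ‖h‖ ^ 2 := by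
  have hdf : ContDiff ℝ 1 (fderiv ℝ f) := hf.fderiv_right (by norm_cast)
  have hcn : Continuous (fun z => ‖fderiv ℝ (fderiv ℝ f) z‖) :=
    continuous_norm_fderiv1 _ hdf
  obtain ⟨M, hM'⟩ := (isCompact_closedBall (0 : Ed d) (R + 1)).exists_bound_of_continuousOn
    hcn.continuousOn
  have hM : ∀ z ∈ closedBall (0 : Ed d) (R + 1), ‖fderiv ℝ (fderiv ℝ f) z‖ ≤ M := by
    intro z hz
    exact (le_abs_self _).trans (hM' z hz)
  have hlip : ∀ a ∈ closedBall (0 : Ed d) (R + 1), ∀ b ∈ closedBall (0 : Ed d) (R + 1),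
      ‖fderiv ℝ f b - fderiv ℝ f a‖ ≤ M * ‖b - a‖ := fun a ha b hb =>
    Convex.norm_image_sub_le_of_norm_fderiv_le (𝕜 := ℝ)
      (fun z _ => (hdf.differentiable (by norm_num)) z) hM (convex_closedBall _ _) ha hb
  have hdiff : Differentiable ℝ f := hf.differentiable (by simp)
  refine ⟨max M 0, le_max_right _ _, fun x h hx hh => ?_⟩
  have hseg : ∀ z ∈ segment ℝ x (x + h), ‖fderiv ℝ f z - fderiv ℝ f (z - h)‖ ≤ max M 0 * ‖h‖ := by
    intro z hz
    have hz1 : z ∈ closedBall (0 : Ed d) (R + 1) := by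
      refine (convex_closedBall (0 : Ed d) (R + 1)).segment_subset ?_ ?_ hz
      · simp; linarith
      · simp; linarith [norm_add_le x h]
    have hz2 : z - h ∈ closedBall (0 : Ed d) (R + 1) := by
      have : z - h ∈ segment ℝ (x - h) x := by
        rw [segment_eq_image'] at hz ⊢
        obtain ⟨t, ht, rfl⟩ := hz
        refine ⟨t, ht, ?_⟩
        simp; abel
      refine (convex_closedBall (0 : Ed d) (R + 1)).segment_subset ?_ ?_ this
      · simp; linarith [norm_sub_le x h]
      · simp; linarith
    have := hlip _ hz2 _ hz1
    rw [sub_sub_cancel] at this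
    exact this.trans (by gcongr; exact le_max_left _ _)
  have hu : ∀ z ∈ segment ℝ x (x + h), HasFDerivWithinAt (fun z => f z - f (z - h))
      (fderiv ℝ f z - fderiv ℝ f (z - h)) (segment ℝ x (x + h)) z := by
    intro z _
    refine HasFDerivAt.hasFDerivWithinAt ?_
    exact (hdiff z).hasFDerivAt.sub ((hasFDerivAt_comp_sub h).2 (hdiff (z - h)).hasFDerivAt)
  have := Convex.norm_image_sub_le_of_norm_hasFDerivWithin_le hu hseg (convex_segment _ _)
    (left_mem_segment ℝ x (x + h)) (right_mem_segment ℝ x (x + h))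
  simp only [add_sub_cancel_right, add_sub_cancel_left, Real.norm_eq_abs] at this
  rw [← abs_neg]
  calc _ = |f (x + h) - f x - (f x - f (x - h))| := by congr 1; ring
    _ ≤ _ := by rw [pow_two, ← mul_assoc]; exact this

lemma modM_integrable (d : ℕ) (hd : 1 ≤ d) {s : ℝ} (hs : s ∈ Set.Ioo (0:ℝ) 1) :
    IntegrableOn (fun h : Ed d => ‖h‖ ^ 2 * ‖h‖ ^ (-((d : ℝ) + 2 * s))) (ball 0 1) := by
  refine integrableOn_ball_of_norm_le_rpow (C := 1) (α := (d : ℝ) + 2 * s - 2) (by simpa using hd)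
    (by simp; linarith [hs.2]) (Eventually.of_forall fun h => ?_) ?_
  · rw [Real.norm_of_nonneg (by positivity), one_mul]
    rcases eq_or_ne h 0 with rfl | hh
    · simp; positivity
    · have : 0 < ‖h‖ := norm_pos_iff.2 hh
      rw [← Real.rpow_natCast, ← Real.rpow_add this]
      apply le_of_eq; congr 1; push_cast; ring
  · exact Measurable.aestronglyMeasurable (by fun_prop)

lemma modG_tendsto (d : ℕ) (hd : 1 ≤ d) {s : ℝ} (hs : s ∈ Set.Ioo (0:ℝ) 1) :
    Tendsto (modG d ((d : ℝ) + 2 * s)) (𝓝[>] (0:ℝ)) (𝓝 0) := by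
  set m : Ed d → ℝ := fun h => ‖h‖ ^ 2 * ‖h‖ ^ (-((d : ℝ) + 2 * s)) with hm
  have hmm : Measurable m := by fun_prop
  have e : modG d ((d : ℝ) + 2 * s) = fun ε => ∫ h, (ball (0 : Ed d) ε).indicator m h := by
    ext ε; rw [integral_indicator measurableSet_ball]; rfl
  rw [e]
  suffices hT : Tendsto (fun ε => ∫ h, (ball (0 : Ed d) ε).indicator m h) (𝓝[>] (0:ℝ))
      (𝓝 (∫ _ : Ed d, (0 : ℝ))) by simpa using hT
  refine tendsto_integral_filter_of_dominated_convergence ((ball (0 : Ed d) 1).indicator m) ?_ ?_ ?_ ?_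
  · exact Eventually.of_forall fun ε => (hmm.indicator measurableSet_ball).aestronglyMeasurable
  · filter_upwards [Ioo_mem_nhdsGT (show (0:ℝ) < 1 by norm_num)] with ε hε
    refine Eventually.of_forall fun h => ?_
    have hm0 : ∀ h, 0 ≤ m h := fun h => by simp only [hm]; positivity
    rw [Real.norm_of_nonneg (indicator_nonneg (fun h _ => hm0 h) h)]
    exact indicator_le_indicator_of_subset (ball_subset_ball hε.2.le) hm0 h
  · exact (modM_integrable d hd hs).integrable_indicator measurableSet_ball
  · refine Eventually.of_forall fun h => ?_
    rcases eq_or_ne h 0 with rfl | hh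
    · have : ∀ ε, (ball (0 : Ed d) ε).indicator m 0 = 0 := by
        intro ε; simp [indicator, hm]
      simp [this]
    · have : 0 < ‖h‖ := norm_pos_iff.2 hh
      refine tendsto_const_nhds.congr' ?_
      filter_upwards [Ioo_mem_nhdsGT this] with ε hε
      rw [indicator_of_notMem]
      simpa using hε.2.le

lemma trKer_sub (d : ℕ) (α ε : ℝ) (h : Ed d) :
    trKer d α 0 h - trKer d α ε h = (ball (0 : Ed d) ε).indicator (fun h => ‖h‖ ^ (-α)) h := by
  unfold trKer
  by_cases hh : ε ≤ ‖h‖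
  · simp [indicator, hh]
  · simp [indicator, hh, not_le.1 hh]

lemma unif_bound (d : ℕ) (hd : 1 ≤ d) {s : ℝ} (hs : s ∈ Set.Ioo (0:ℝ) 1) (f : Ed d → ℝ)
    (hf : Integrable (fun y => f y * (1 + ‖y‖) ^ (-((d : ℝ) + 2 * s))))
    (hc : ContDiff ℝ (⊤ : ℕ∞) f) (R : ℝ) :
    ∃ M : ℝ, 0 ≤ M ∧ ∀ x : Ed d, ‖x‖ ≤ R → ∀ ε ∈ Set.Ioc (0:ℝ) 1,
      |fracLapTrunc d s f x ε - limL d s f x| ≤ M * modG d ((d : ℝ) + 2 * s) ε := by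
  obtain ⟨M, hM0, hM⟩ := second_diff d f hc R
  have hcf : Continuous f := hc.continuous
  refine ⟨M, hM0, fun x hx ε hε => ?_⟩
  set α := (d : ℝ) + 2 * s with hα
  set m : Ed d → ℝ := fun h => ‖h‖ ^ 2 * ‖h‖ ^ (-α) with hm
  set D : Ed d → ℝ := fun h => (2 * f x - f (x + h) - f (x - h)) *
    (ball (0 : Ed d) ε).indicator (fun h => ‖h‖ ^ (-α)) h with hD
  obtain ⟨hi, he⟩ := trunc_symm d hs.1 hε.1 f hf hcf x
  have hbd : ∀ h, ‖D h‖ ≤ (ball (0 : Ed d) ε).indicator (fun h => M * m h) h := by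
    intro h
    by_cases hh : h ∈ ball (0 : Ed d) ε
    · simp only [hD, indicator_of_mem hh, norm_mul, hm]
      rw [Real.norm_of_nonneg (show 0 ≤ ‖h‖ ^ (-α) by positivity), ← mul_assoc]
      gcongr
      refine hM x h hx ?_
      have : ‖h‖ < ε := by simpa using hh
      linarith [hε.2]
    · simp [hD, indicator_of_notMem hh]
  have hmi : Integrable ((ball (0 : Ed d) ε).indicator (fun h => M * m h)) :=
    (integrable_indicator_iff measurableSet_ball).2
      (((modM_integrable d hd hs).mono_set (ball_subset_ball hε.2)).const_mul M)
  have hDi : Integrable D := by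
    refine hmi.mono' ?_ (Eventually.of_forall hbd)
    refine Measurable.aestronglyMeasurable ?_
    refine Measurable.mul ?_ (Measurable.indicator (by fun_prop) measurableSet_ball)
    exact Continuous.measurable (by fun_prop)
  have e1 : limL d s f x = fracLapTrunc d s f x ε + (1 / 2) * ∫ h, D h := by
    rw [he, ← mul_add, ← integral_add hi hDi]
    unfold limL
    congr 2; ext h
    simp only [hD, ← trKer_sub, ← hα]; ring
  have e2 : ‖∫ h, D h‖ ≤ M * modG d α ε := by
    refine (norm_integral_le_of_norm_le hmi (Eventually.of_forall hbd)).trans ?_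
    rw [integral_indicator measurableSet_ball, integral_const_mul]
    rfl
  rw [e1, sub_add_cancel_left, abs_neg, abs_mul]
  rw [Real.norm_eq_abs] at e2
  have : |(1 / 2 : ℝ)| = 1 / 2 := abs_of_nonneg (by norm_num)
  rw [this]
  linarith [abs_nonneg (∫ h, D h)]

lemma trunc_tendsto (d : ℕ) (hd : 1 ≤ d) {s : ℝ} (hs : s ∈ Set.Ioo (0:ℝ) 1) (f : Ed d → ℝ)
    (hf : Integrable (fun y => f y * (1 + ‖y‖) ^ (-((d : ℝ) + 2 * s))))
    (hc : ContDiff ℝ (⊤ : ℕ∞) f) (x : Ed d) :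
    Tendsto (fracLapTrunc d s f x) (𝓝[>] (0:ℝ)) (𝓝 (limL d s f x)) := by
  obtain ⟨M, hM0, hM⟩ := unif_bound d hd hs f hf hc ‖x‖
  rw [tendsto_iff_norm_sub_tendsto_zero]
  refine squeeze_zero' (Eventually.of_forall fun _ => norm_nonneg _) ?_
    (by simpa using (modG_tendsto d hd hs).const_mul M)
  filter_upwards [Ioo_mem_nhdsGT (show (0:ℝ) < 1 by norm_num)] with ε hε
  exact hM x le_rfl ε ⟨hε.1, hε.2.le⟩

lemma fracLap_eq (d : ℕ) (hd : 1 ≤ d) {s : ℝ} (hs : s ∈ Set.Ioo (0:ℝ) 1) (Cds : ℝ) (f : Ed d → ℝ)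
    (hf : Integrable (fun y => f y * (1 + ‖y‖) ^ (-((d : ℝ) + 2 * s))))
    (hc : ContDiff ℝ (⊤ : ℕ∞) f) (x : Ed d) :
    fracLap d s Cds f x = Cds * limL d s f x := by
  unfold fracLap
  rw [(trunc_tendsto d hd hs f hf hc x).limUnder_eq]

lemma trunc_continuous (d : ℕ) {s ε : ℝ} (hs : 0 < s) (hε : 0 < ε) (f : Ed d → ℝ)
    (hf : Integrable (fun y => f y * (1 + ‖y‖) ^ (-((d : ℝ) + 2 * s)))) (hc : Continuous f) :
    Continuous (fun x => fracLapTrunc d s f x ε) := by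
  have hα0 : 0 ≤ (d : ℝ) + 2 * s := by positivity
  simp only [trunc_split d hs hε f hf hc]
  refine (hc.mul continuous_const).sub ?_
  rw [continuous_iff_continuousAt]
  intro x₀
  refine continuousAt_of_dominated
    (bound := fun y => ((1 + (‖x₀‖ + 1)) * (1 + ε⁻¹)) ^ ((d : ℝ) + 2 * s) *
      ‖f y * (1 + ‖y‖) ^ (-((d : ℝ) + 2 * s))‖) ?_ ?_ (hf.norm.const_mul _) ?_
  · exact Eventually.of_forall fun x => (integrable_mul_trKer d hα0 hε f hf hc x).1
  · filter_upwards [ball_mem_nhds x₀ one_pos] with x hx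
    refine Eventually.of_forall fun y => ?_
    have hx' : ‖x‖ ≤ ‖x₀‖ + 1 := by
      have h1 : ‖x - x₀‖ < 1 := by simpa [dist_eq_norm] using hx
      have := norm_le_insert' x x₀
      linarith
    rw [norm_mul, norm_mul, Real.norm_of_nonneg (trKer_nonneg _ _ _ _),
      Real.norm_of_nonneg (show 0 ≤ (1 + ‖y‖) ^ (-((d : ℝ) + 2 * s)) by positivity)]
    calc ‖f y‖ * trKer d ((d : ℝ) + 2 * s) ε (x - y)
        ≤ ‖f y‖ * (((1 + ‖x‖) * (1 + ε⁻¹)) ^ ((d : ℝ) + 2 * s) * (1 + ‖y‖) ^ (-((d : ℝ) + 2 * s))) := by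
          gcongr; exact trKer_le d hα0 hε x y
      _ ≤ ‖f y‖ * (((1 + (‖x₀‖ + 1)) * (1 + ε⁻¹)) ^ ((d : ℝ) + 2 * s) *
          (1 + ‖y‖) ^ (-((d : ℝ) + 2 * s))) := by gcongr
      _ = _ := by ring
  · have hsph : volume (sphere x₀ ε) = 0 := Measure.addHaar_sphere_of_ne_zero _ x₀ hε.ne'
    have : ∀ᵐ y : Ed d, y ∉ sphere x₀ ε := measure_eq_zero_iff_ae_notMem.1 hsph
    filter_upwards [this] with y hy
    refine continuousAt_const.mul ?_
    have hne : ‖x₀ - y‖ ≠ ε := by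
      rw [mem_sphere, dist_eq_norm, norm_sub_rev] at hy; exact hy
    have hcn : ContinuousAt (fun x : Ed d => ‖x - y‖) x₀ := by fun_prop
    rcases lt_or_gt_of_ne hne with h | h
    · have : (fun x => trKer d ((d : ℝ) + 2 * s) ε (x - y)) =ᶠ[𝓝 x₀] fun _ => 0 := by
        filter_upwards [hcn.eventually (gt_mem_nhds h)] with x hx
        exact indicator_of_notMem (by simpa using hx) _
      exact continuousAt_const.congr this.symm
    · have : (fun x => trKer d ((d : ℝ) + 2 * s) ε (x - y)) =ᶠ[𝓝 x₀]
          fun x => ‖x - y‖ ^ (-((d : ℝ) + 2 * s)) := by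
        filter_upwards [hcn.eventually (lt_mem_nhds h)] with x hx
        exact indicator_of_mem (by simpa using hx.le) _
      refine ContinuousAt.congr ?_ this.symm
      exact hcn.rpow_const (Or.inl (by linarith))

lemma limL_continuous (d : ℕ) (hd : 1 ≤ d) {s : ℝ} (hs : s ∈ Set.Ioo (0:ℝ) 1) (f : Ed d → ℝ)
    (hf : Integrable (fun y => f y * (1 + ‖y‖) ^ (-((d : ℝ) + 2 * s))))
    (hc : ContDiff ℝ (⊤ : ℕ∞) f) : Continuous (limL d s f) := by
  have hT : TendstoLocallyUniformly (fun ε x => fracLapTrunc d s f x ε) (limL d s f) (𝓝[>] (0:ℝ)) := by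
    rw [Metric.tendstoLocallyUniformly_iff]
    intro η hη x
    obtain ⟨M, hM0, hM⟩ := unif_bound d hd hs f hf hc (‖x‖ + 1)
    refine ⟨ball x 1, ball_mem_nhds x one_pos, ?_⟩
    have ht : Tendsto (fun ε => M * modG d ((d : ℝ) + 2 * s) ε) (𝓝[>] (0:ℝ)) (𝓝 0) := by
      simpa using (modG_tendsto d hd hs).const_mul M
    filter_upwards [Ioo_mem_nhdsGT (show (0:ℝ) < 1 by norm_num), ht.eventually (gt_mem_nhds hη)]
      with ε hε hε2 y hy
    have hy' : ‖y‖ ≤ ‖x‖ + 1 := by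
      have h1 : ‖y - x‖ < 1 := by simpa [dist_eq_norm] using hy
      have := norm_le_insert' y x
      linarith
    rw [dist_comm, Real.dist_eq]
    exact (hM y hy' ε ⟨hε.1, hε.2.le⟩).trans_lt hε2
  refine hT.continuous (Eventually.frequently ?_)
  filter_upwards [self_mem_nhdsWithin] with ε hε
  exact trunc_continuous d hs.1 hε f hf hc.continuous

lemma small_integral (d : ℕ) (g : ℝ → ℝ) (hg : Tendsto g (𝓝[>] (0:ℝ)) (𝓝 0)) (R : ℝ)
    (w : Ed d → ℝ) (hw : Continuous w) (H : ℝ → Ed d → ℝ)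
    (hb : ∀ ε ∈ Set.Ioc (0:ℝ) 1, ∀ x, ‖x‖ ≤ R → |H ε x| ≤ g ε)
    (h0 : ∀ ε ∈ Set.Ioc (0:ℝ) 1, ∀ x, R < ‖x‖ → w x * H ε x = 0) :
    Tendsto (fun ε => ∫ x, w x * H ε x) (𝓝[>] (0:ℝ)) (𝓝 0) := by
  have hi : IntegrableOn (fun x => |w x|) (closedBall (0 : Ed d) R) :=
    hw.abs.continuousOn.integrableOn_compact (isCompact_closedBall _ _)
  refine squeeze_zero_norm' (a := fun ε => g ε * ∫ x in closedBall (0 : Ed d) R, |w x|) ?_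
    (by simpa using hg.mul_const _)
  filter_upwards [Ioo_mem_nhdsGT (show (0:ℝ) < 1 by norm_num)] with ε hε
  have hε' : ε ∈ Set.Ioc (0:ℝ) 1 := ⟨hε.1, hε.2.le⟩
  rw [← integral_const_mul, ← integral_indicator measurableSet_closedBall]
  refine norm_integral_le_of_norm_le ((integrable_indicator_iff measurableSet_closedBall).2
    (hi.const_mul (g ε))) (Eventually.of_forall fun x => ?_)
  by_cases hx : ‖x‖ ≤ R
  · rw [indicator_of_mem (by simpa using hx), norm_mul, mul_comm]
    exact mul_le_mul_of_nonneg_right (hb ε hε' x hx) (norm_nonneg _)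
  · rw [h0 ε hε' x (not_le.1 hx), indicator_of_notMem (by simpa using hx), norm_zero]

lemma trunc_fubini (d : ℕ) {s ε : ℝ} (hs : 0 < s) (hε : 0 < ε) (v φ : Ed d → ℝ)
    (hv : Integrable (fun y => v y * (1 + ‖y‖) ^ (-((d : ℝ) + 2 * s)))) (hvc : Continuous v)
    (hφ : Integrable (fun y => φ y * (1 + ‖y‖) ^ (-((d : ℝ) + 2 * s)))) (hφc : Continuous φ)
    (hφs : HasCompactSupport φ) :
    Integrable (fun x => v x * fracLapTrunc d s φ x ε) ∧
    ∫ x, v x * fracLapTrunc d s φ x ε = ∫ x, fracLapTrunc d s v x ε * φ x := by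
  have hα0 : 0 ≤ (d : ℝ) + 2 * s := by positivity
  set α := (d : ℝ) + 2 * s with hα
  set c := ∫ z, trKer d α ε z with hcdef
  have hvφ : Integrable (fun x => v x * φ x) :=
    (hvc.mul hφc).integrable_of_hasCompactSupport hφs.mul_left
  have hφ2 : Integrable (fun y => φ y * ((1 + ‖y‖) * (1 + ε⁻¹)) ^ α) := by
    refine Continuous.integrable_of_hasCompactSupport ?_ hφs.mul_right
    refine hφc.mul (Continuous.rpow_const (by fun_prop) (fun x => Or.inr hα0))
  have hP : Integrable (Function.uncurry fun x y => v x * φ y * trKer d α ε (x - y))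
      (volume.prod volume) := by
    refine (hv.norm.mul_prod hφ2.norm).mono' ?_ (Eventually.of_forall ?_)
    · refine Measurable.aestronglyMeasurable ?_
      refine Measurable.mul ?_ ((measurable_trKer d α ε).comp (by fun_prop))
      exact Continuous.measurable (by fun_prop)
    · rintro ⟨x, y⟩
      simp only [Function.uncurry, norm_mul]
      rw [Real.norm_of_nonneg (trKer_nonneg _ _ _ _),
        Real.norm_of_nonneg (show 0 ≤ (1 + ‖x‖) ^ (-α) by positivity),
        Real.norm_of_nonneg (show 0 ≤ ((1 + ‖y‖) * (1 + ε⁻¹)) ^ α by positivity), trKer_symm]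
      have := mul_le_mul_of_nonneg_left (trKer_le d hα0 hε y x)
        (mul_nonneg (norm_nonneg (v x)) (norm_nonneg (φ y)))
      linarith
  have e1 : (fun x => v x * fracLapTrunc d s φ x ε) = fun x =>
      v x * φ x * c - ∫ y, v x * φ y * trKer d α ε (x - y) := by
    ext x
    rw [trunc_split d hs hε φ hφ hφc, mul_sub, ← integral_const_mul (v x) (fun y => φ y * trKer d α ε (x - y))]
    simp only [mul_assoc, hcdef, hα]
  have e2 : (fun x => fracLapTrunc d s v x ε * φ x) = fun y =>
      v y * φ y * c - ∫ x, v x * φ y * trKer d α ε (x - y) := by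
    ext y
    rw [trunc_split d hs hε v hv hvc, sub_mul, ← integral_mul_const]
    congr 1
    · ring
    · congr 1; ext x; rw [trKer_symm]; ring
  have i1 := hvφ.mul_const c
  have i2 : Integrable (fun x => ∫ y, v x * φ y * trKer d α ε (x - y)) := hP.integral_prod_left
  have i3 : Integrable (fun y => ∫ x, v x * φ y * trKer d α ε (x - y)) := hP.integral_prod_right
  rw [e1, e2]
  refine ⟨i1.sub i2, ?_⟩
  rw [integral_sub i1 i2, integral_sub i1 i3, integral_integral_swap hP]

end

theorem stmt9 (d : ℕ) (hd : 1 ≤ d) (s : ℝ) (hs : s ∈ Set.Ioo (0:ℝ) 1)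
    (Cds : ℝ) (hC : 0 < Cds)
    (p Λ : ℝ) (hp : 1 < p) (hΛ : -(d:ℝ) - p * s ≤ Λ)
    (v : Ed d → ℝ) (hv : ContDiff ℝ (⊤ : ℕ∞) v)
    (hvi : IntegrableOn (fun y : Ed d => |v y| ^ p * ‖y‖ ^ Λ) {y : Ed d | 1 < ‖y‖}) :
    Continuous (fracLap d s Cds v) ∧
    ∀ φ : Ed d → ℝ, ContDiff ℝ (⊤ : ℕ∞) φ → HasCompactSupport φ →
      ∫ x : Ed d, v x * fracLap d s Cds φ x = ∫ x : Ed d, fracLap d s Cds v x * φ x := by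
  have hvW := young_weight d s hs p Λ hp hΛ v hv.continuous hvi
  refine ⟨?_, fun φ hφ hφs => ?_⟩
  · have : fracLap d s Cds v = fun x => Cds * limL d s v x :=
      funext fun x => fracLap_eq d hd hs Cds v hvW hv x
    rw [this]
    exact continuous_const.mul (limL_continuous d hd hs v hvW hv)
  have hφW : Integrable (fun y => φ y * (1 + ‖y‖) ^ (-((d : ℝ) + 2 * s))) := by
    refine Continuous.integrable_of_hasCompactSupport ?_ hφs.mul_right
    refine hφ.continuous.mul (Continuous.rpow_const (by fun_prop) (fun x => Or.inl ?_))
    positivity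
  simp only [fracLap_eq d hd hs Cds v hvW hv, fracLap_eq d hd hs Cds φ hφW hφ]
  suffices h : ∫ x, v x * limL d s φ x = ∫ x, limL d s v x * φ x by
    have e1 : (fun x => v x * (Cds * limL d s φ x)) = fun x => Cds * (v x * limL d s φ x) := by
      ext x; ring
    have e2 : (fun x => Cds * limL d s v x * φ x) = fun x => Cds * (limL d s v x * φ x) := by
      ext x; ring
    rw [e1, e2, integral_const_mul, integral_const_mul, h]
  obtain ⟨R, hR0, hR⟩ := hφs.isBounded.exists_pos_norm_le
  have hφ0 : ∀ x, R < ‖x‖ → φ x = 0 := by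
    intro x hx
    by_contra hne
    exact absurd (hR x (subset_tsupport φ hne)) (not_le.2 hx)
  -- away from the support the truncations do not depend on `ε ≤ 1`
  have hfar : ∀ ε ∈ Set.Ioc (0:ℝ) 1, ∀ x : Ed d, R + 1 < ‖x‖ →
      fracLapTrunc d s φ x ε = fracLapTrunc d s φ x 1 := by
    intro ε hε x hx
    rw [trunc_eq, trunc_eq]
    congr 1
    ext y
    rw [hφ0 x (by linarith)]
    by_cases hy : ‖y‖ ≤ R
    · have h1 : 1 ≤ ‖x - y‖ := by
        have := norm_sub_norm_le x y
        linarith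
      unfold trKer
      rw [indicator_of_mem (by exact hε.2.trans h1), indicator_of_mem (by exact h1)]
    · rw [hφ0 y (not_le.1 hy)]; simp
  have hfarL : ∀ x : Ed d, R + 1 < ‖x‖ → limL d s φ x = fracLapTrunc d s φ x 1 := by
    intro x hx
    refine tendsto_nhds_unique (trunc_tendsto d hd hs φ hφW hφ x) ?_
    refine tendsto_const_nhds.congr' ?_
    filter_upwards [Ioo_mem_nhdsGT (show (0:ℝ) < 1 by norm_num)] with ε hε
    exact (hfar ε ⟨hε.1, hε.2.le⟩ x hx).symm
  obtain ⟨M₁, -, hM₁⟩ := unif_bound d hd hs φ hφW hφ (R + 1)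
  obtain ⟨M₂, -, hM₂⟩ := unif_bound d hd hs v hvW hv R
  have hg : ∀ M : ℝ, Tendsto (fun ε => M * modG d ((d : ℝ) + 2 * s) ε) (𝓝[>] (0:ℝ)) (𝓝 0) :=
    fun M => by simpa using (modG_tendsto d hd hs).const_mul M
  have T1 := small_integral d _ (hg M₁) (R + 1) v hv.continuous
    (fun ε x => fracLapTrunc d s φ x ε - limL d s φ x)
    (fun ε hε x hx => hM₁ x hx ε hε)
    (fun ε hε x hx => by rw [hfar ε hε x hx, hfarL x hx, sub_self, mul_zero])
  have T2 := small_integral d _ (hg M₂) R φ hφ.continuous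
    (fun ε x => fracLapTrunc d s v x ε - limL d s v x)
    (fun ε hε x hx => hM₂ x hx ε hε)
    (fun ε hε x hx => by rw [hφ0 x hx, zero_mul])
  have I1 : ∀ ε ∈ Set.Ioc (0:ℝ) 1,
      Integrable (fun x => v x * (fracLapTrunc d s φ x ε - limL d s φ x)) := by
    intro ε hε
    refine Continuous.integrable_of_hasCompactSupport ?_ ?_
    · exact hv.continuous.mul ((trunc_continuous d hs.1 hε.1 φ hφW hφ.continuous).sub
        (limL_continuous d hd hs φ hφW hφ))
    · refine HasCompactSupport.intro (isCompact_closedBall (0 : Ed d) (R + 1)) fun x hx => ?_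
      have hx' : R + 1 < ‖x‖ := by simpa using hx
      rw [hfar ε hε x hx', hfarL x hx', sub_self, mul_zero]
  have I2 : Integrable (fun x => limL d s v x * φ x) :=
    ((limL_continuous d hd hs v hvW hv).mul hφ.continuous).integrable_of_hasCompactSupport
      hφs.mul_left
  have I3 : ∀ ε ∈ Set.Ioc (0:ℝ) 1, Integrable (fun x => fracLapTrunc d s v x ε * φ x) :=
    fun ε hε => ((trunc_continuous d hs.1 hε.1 v hvW hv.continuous).mul
      hφ.continuous).integrable_of_hasCompactSupport hφs.mul_left
  have key : ∀ ε ∈ Set.Ioc (0:ℝ) 1,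
      (∫ x, v x * limL d s φ x) - ∫ x, limL d s v x * φ x =
      (∫ x, φ x * (fracLapTrunc d s v x ε - limL d s v x)) -
        ∫ x, v x * (fracLapTrunc d s φ x ε - limL d s φ x) := by
    intro ε hε
    obtain ⟨J1, J2⟩ := trunc_fubini d hs.1 hε.1 v φ hvW hv.continuous hφW hφ.continuous hφs
    have a1 : ∫ x, v x * limL d s φ x = (∫ x, v x * fracLapTrunc d s φ x ε) -
        ∫ x, v x * (fracLapTrunc d s φ x ε - limL d s φ x) := by
      rw [← integral_sub J1 (I1 ε hε)]
      congr 1; ext x; ring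
    have a2 : ∫ x, φ x * (fracLapTrunc d s v x ε - limL d s v x) =
        (∫ x, fracLapTrunc d s v x ε * φ x) - ∫ x, limL d s v x * φ x := by
      rw [← integral_sub (I3 ε hε) I2]
      congr 1; ext x; ring
    rw [a1, a2, J2]; ring
  have T3 := T2.sub T1
  rw [sub_zero] at T3
  have T4 : Tendsto (fun _ : ℝ => (∫ x, v x * limL d s φ x) - ∫ x, limL d s v x * φ x)
      (𝓝[>] (0:ℝ)) (𝓝 0) := by
    refine T3.congr' ?_
    filter_upwards [Ioo_mem_nhdsGT (show (0:ℝ) < 1 by norm_num)] with ε hε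
    exact (key ε ⟨hε.1, hε.2.le⟩).symm
  exact sub_eq_zero.1 (tendsto_nhds_unique tendsto_const_nhds T4)
end

section
/- Let d > 2s with s ∈ (0,1), φ ∈ C_c^∞(ℝ^d), Φ = I_{d,s} ∗ φ its Riesz potential, and p ∈ (1, d/(d−2s)). Then the function l_{p,s}(Φ)(x) = ∫_{ℝ^d} |Φ(x)−Φ(y)|^p/|x−y|^{d+ps} dy is continuous on ℝ^d and there exists K > 0 such that l_{p,s}(Φ)(x) ≤ K (1+|x|)^{−p(d−s)} for all x ∈ ℝ^d. -/
open MeasureTheory Filter Metric Set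
open scoped Topology ENNReal

theorem aux_pow_ball (d : ℕ) (hd : 1 ≤ d) (b : ℝ) (hb : b < d) :
    ∃ c : ℝ, 0 ≤ c ∧ ∀ r : ℝ, 0 < r →
      Integrable ((closedBall (0 : Ed d) r).indicator (fun z => ‖z‖ ^ (-b))) ∧
      ∫ z, (closedBall (0 : Ed d) r).indicator (fun z => ‖z‖ ^ (-b)) z = c * r ^ ((d:ℝ) - b) := by
  have : Nonempty (Fin d) := ⟨⟨0, hd⟩⟩
  have hdb : 0 < (d:ℝ) - b := by linarith
  have hform : ∀ r : ℝ, (closedBall (0 : Ed d) r).indicator (fun z => ‖z‖ ^ (-b)) =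
      fun z : Ed d => (Iic r).indicator (fun t : ℝ => t ^ (-b)) ‖z‖ := by
    intro r; ext z
    simp [indicator]
  have hG : ∀ r : ℝ, ∀ y ∈ Ioi (0:ℝ), y ^ (Module.finrank ℝ (Ed d) - 1) • (Iic r).indicator (fun t : ℝ => t ^ (-b)) y
      = (Iic r).indicator (fun t : ℝ => t ^ ((d:ℝ) - b - 1)) y := by
    intro r y hy
    have hy : 0 < y := hy
    simp only [indicator, mem_Iic, smul_eq_mul, finrank_euclideanSpace, Fintype.card_fin]
    split_ifs
    · rw [← Real.rpow_natCast, ← Real.rpow_add hy, Nat.cast_sub hd]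
      congr 1; push_cast; ring
    · simp
  refine ⟨d * (volume.real (ball (0 : Ed d) 1)) * (((d:ℝ) - b))⁻¹, by positivity, fun r hr => ?_⟩
  rw [hform]
  have hI : IntervalIntegrable (fun t : ℝ => t ^ ((d:ℝ) - b - 1)) volume 0 r :=
    intervalIntegral.intervalIntegrable_rpow' (by linarith)
  have hIoc : Ioi (0:ℝ) ∩ Iic r = Ioc 0 r := by ext; simp
  constructor
  · rw [integrable_fun_norm_addHaar volume]
    rw [integrableOn_congr_fun (hG r) measurableSet_Ioi]
    rw [intervalIntegrable_iff_integrableOn_Ioc_of_le hr.le] at hI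
    rw [← hIoc] at hI
    rw [IntegrableOn, integrable_indicator_iff measurableSet_Iic, IntegrableOn, Measure.restrict_restrict measurableSet_Iic, inter_comm]
    exact hI
  · rw [integral_fun_norm_addHaar volume]
    rw [setIntegral_congr_fun measurableSet_Ioi (hG r), setIntegral_indicator measurableSet_Iic, hIoc,
      ← intervalIntegral.integral_of_le hr.le, integral_rpow (Or.inl (by linarith))]
    simp only [finrank_euclideanSpace, Fintype.card_fin, smul_eq_mul, nsmul_eq_mul]
    rw [Real.zero_rpow (by linarith)]
    simp only [sub_add_cancel, sub_zero]
    field_simp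

theorem aux_pow_tail (d : ℕ) (hd : 1 ≤ d) (b : ℝ) (hb : (d:ℝ) < b) :
    ∃ c : ℝ, 0 ≤ c ∧ ∀ r : ℝ, 0 < r →
      Integrable ((closedBall (0 : Ed d) r)ᶜ.indicator (fun z => ‖z‖ ^ (-b))) ∧
      ∫ z, (closedBall (0 : Ed d) r)ᶜ.indicator (fun z => ‖z‖ ^ (-b)) z = c * r ^ ((d:ℝ) - b) := by
  have : Nonempty (Fin d) := ⟨⟨0, hd⟩⟩
  have hdb : 0 < b - d := by linarith
  have hform : ∀ r : ℝ, (closedBall (0 : Ed d) r)ᶜ.indicator (fun z => ‖z‖ ^ (-b)) =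
      fun z : Ed d => (Ioi r).indicator (fun t : ℝ => t ^ (-b)) ‖z‖ := by
    intro r; ext z
    simp [indicator]
  have hG : ∀ r : ℝ, ∀ y ∈ Ioi (0:ℝ), y ^ (Module.finrank ℝ (Ed d) - 1) • (Ioi r).indicator (fun t : ℝ => t ^ (-b)) y
      = (Ioi r).indicator (fun t : ℝ => t ^ ((d:ℝ) - b - 1)) y := by
    intro r y hy
    have hy : 0 < y := hy
    simp only [indicator, mem_Ioi, smul_eq_mul, finrank_euclideanSpace, Fintype.card_fin]
    split_ifs
    · rw [← Real.rpow_natCast, ← Real.rpow_add hy, Nat.cast_sub hd]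
      congr 1; push_cast; ring
    · simp
  refine ⟨d * (volume.real (ball (0 : Ed d) 1)) * ((b - (d:ℝ)))⁻¹, by positivity, fun r hr => ?_⟩
  rw [hform]
  have hI : IntegrableOn (fun t : ℝ => t ^ ((d:ℝ) - b - 1)) (Ioi r) :=
    integrableOn_Ioi_rpow_of_lt (by linarith) hr
  have hIoc : Ioi (0:ℝ) ∩ Ioi r = Ioi r := by
    ext x; simp only [mem_inter_iff, mem_Ioi]; exact ⟨fun h => h.2, fun h => ⟨hr.trans h, h⟩⟩
  constructor
  · rw [integrable_fun_norm_addHaar volume]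
    rw [integrableOn_congr_fun (hG r) measurableSet_Ioi]
    rw [← hIoc] at hI
    rw [IntegrableOn, integrable_indicator_iff measurableSet_Ioi, IntegrableOn, Measure.restrict_restrict measurableSet_Ioi, inter_comm]
    exact hI
  · rw [integral_fun_norm_addHaar volume]
    rw [setIntegral_congr_fun measurableSet_Ioi (hG r), setIntegral_indicator measurableSet_Ioi, hIoc,
      integral_Ioi_rpow_of_lt (by linarith) hr]
    simp only [finrank_euclideanSpace, Fintype.card_fin, smul_eq_mul, nsmul_eq_mul]
    simp only [sub_add_cancel]
    have : (d:ℝ) - b ≠ 0 := by linarith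
    rw [show b - (d:ℝ) = -((d:ℝ) - b) by ring]
    field_simp

theorem aux_rpow_lip (a m u v : ℝ) (ha : 0 < a) (hm : 0 < m) (hu : m ≤ u) (hv : m ≤ v) :
    |u ^ (-a) - v ^ (-a)| ≤ a * m ^ (-(a + 1)) * |u - v| := by
  have h := Convex.norm_image_sub_le_of_norm_hasDerivWithin_le (𝕜 := ℝ) (f := fun t : ℝ => t ^ (-a))
    (f' := fun t => (-a) * t ^ (-a - 1)) (s := Ici m) (C := a * m ^ (-(a + 1))) (x := v) (y := u)
    ?_ ?_ (convex_Ici m) hv hu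
  · simpa [Real.norm_eq_abs] using h
  · intro t ht
    have ht : m ≤ t := ht
    exact (Real.hasDerivAt_rpow_const (Or.inl (by linarith))).hasDerivWithinAt
  · intro t ht
    have ht : m ≤ t := ht
    have ht0 : 0 < t := hm.trans_le ht
    rw [norm_mul, norm_neg, Real.norm_of_nonneg ha.le, Real.norm_of_nonneg (by positivity),
      show -a - 1 = -(a + 1) by ring]
    exact mul_le_mul_of_nonneg_left
      (Real.rpow_le_rpow_of_nonpos hm ht (by linarith : -(a + 1) ≤ 0)) ha.le

theorem aux_kernel (d : ℕ) (hd : 1 ≤ d) (a : ℝ) (ha : 0 < a) (had : a < d) (R : ℝ) :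
    ∃ Cg : ℝ, 0 ≤ Cg ∧ ∀ x : Ed d,
      Integrable ((closedBall x R).indicator (fun z : Ed d => ‖z‖ ^ (-a))) ∧
      ∫ z, (closedBall x R).indicator (fun z : Ed d => ‖z‖ ^ (-a)) z ≤ Cg := by
  obtain ⟨c, hc, h⟩ := aux_pow_ball d hd a had
  obtain ⟨h1, h2⟩ := h 1 one_pos
  refine ⟨c + volume.real (closedBall (0 : Ed d) R), by positivity, fun x => ?_⟩
  have hone : Integrable ((closedBall x R).indicator (fun _ : Ed d => (1:ℝ))) := by
    rw [integrable_indicator_iff measurableSet_closedBall]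
    exact integrableOn_const measure_closedBall_lt_top.ne
  have hle : ∀ z : Ed d, (closedBall x R).indicator (fun z : Ed d => ‖z‖ ^ (-a)) z ≤
      (closedBall (0 : Ed d) 1).indicator (fun z => ‖z‖ ^ (-a)) z +
      (closedBall x R).indicator (fun _ : Ed d => (1:ℝ)) z := by
    intro z
    by_cases hz : z ∈ closedBall (0 : Ed d) 1
    · rw [indicator_of_mem hz]
      by_cases hz' : z ∈ closedBall x R
      · rw [indicator_of_mem hz', indicator_of_mem hz']; linarith
      · rw [indicator_of_notMem hz', indicator_of_notMem hz']; positivity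
    · rw [indicator_of_notMem hz, zero_add]
      apply indicator_le_indicator
      simp only [mem_closedBall, dist_zero_right, not_le] at hz
      exact Real.rpow_le_one_of_one_le_of_nonpos hz.le (by linarith)
  have hnn : ∀ z : Ed d, 0 ≤ (closedBall x R).indicator (fun z : Ed d => ‖z‖ ^ (-a)) z := by
    intro z; apply indicator_nonneg; intro z _; positivity
  have hInt : Integrable ((closedBall x R).indicator (fun z : Ed d => ‖z‖ ^ (-a))) := by
    refine (h1.add hone).mono' ?_ (Eventually.of_forall fun z => ?_)
    · apply Measurable.aestronglyMeasurable
      exact (measurable_norm.pow_const _).indicator measurableSet_closedBall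
    · rw [Real.norm_of_nonneg (hnn z)]; exact hle z
  refine ⟨hInt, ?_⟩
  calc _ ≤ ∫ z, ((closedBall (0 : Ed d) 1).indicator (fun z => ‖z‖ ^ (-a)) z +
      (closedBall x R).indicator (fun _ : Ed d => (1:ℝ)) z) := integral_mono hInt (h1.add hone) hle
    _ = _ := by
      rw [integral_add h1 hone, h2, integral_indicator measurableSet_closedBall]
      simp [Measure.real, Measure.addHaar_closedBall_center]

theorem aux_riesz (d : ℕ) (hd : 1 ≤ d) (a : ℝ) (ha : 0 < a) (had : a < d) (κ : ℝ) (hκ : 0 < κ)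
    (φ : Ed d → ℝ) (hφ : Continuous φ) (hφc : HasCompactSupport φ) (L : ℝ) (hL : 0 ≤ L)
    (hLip : ∀ x y, |φ x - φ y| ≤ L * ‖x - y‖) :
    ∃ C : ℝ, 0 ≤ C ∧
      (∀ x : Ed d, |∫ y, κ * ‖x - y‖ ^ (-a) * φ y| ≤ C * (1 + ‖x‖) ^ (-a)) ∧
      (∀ x y : Ed d, ‖x - y‖ ≤ (1 + ‖x‖) / 2 →
        |(∫ z, κ * ‖x - z‖ ^ (-a) * φ z) - ∫ z, κ * ‖y - z‖ ^ (-a) * φ z| ≤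
          C * (1 + ‖x‖) ^ (-(a + 1)) * ‖x - y‖) := by
  obtain ⟨R, hR1, hR⟩ : ∃ R : ℝ, 1 ≤ R ∧ ∀ z, R < ‖z‖ → φ z = 0 := by
    obtain ⟨R, hR⟩ := hφc.isCompact.isBounded.subset_closedBall (0 : Ed d)
    refine ⟨max R 1, le_max_right _ _, fun z hz => ?_⟩
    by_contra h
    have := hR (subset_tsupport φ h)
    simp only [mem_closedBall, dist_zero_right] at this
    exact absurd (le_max_left R 1) (by linarith)
  obtain ⟨M, hM0, hM⟩ : ∃ M : ℝ, 0 ≤ M ∧ ∀ z, |φ z| ≤ M := by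
    obtain ⟨M, hM⟩ := hφ.bounded_above_of_compact_support hφc
    exact ⟨M, (norm_nonneg _).trans (hM 0), hM⟩
  obtain ⟨Cg, hCg, hG⟩ := aux_kernel d hd a ha had R
  set Φ : Ed d → ℝ := fun x => ∫ z, κ * ‖x - z‖ ^ (-a) * φ z with hΦ
  have hsupp : ∀ x z : Ed d, z ∉ closedBall x R → φ (x - z) = 0 := by
    intro x z hz
    apply hR
    rwa [mem_closedBall, dist_comm, dist_eq_norm, not_le] at hz
  have hrep : ∀ x, Φ x = ∫ z, κ * ‖z‖ ^ (-a) * φ (x - z) := by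
    intro x
    rw [← integral_sub_left_eq_self _ volume x]
    simp [hΦ]
  have hInt : ∀ x, Integrable (fun z => κ * ‖z‖ ^ (-a) * φ (x - z)) := by
    intro x
    refine ((hG x).1.const_mul (κ * M)).mono' ?_ (Eventually.of_forall fun z => ?_)
    · apply Measurable.aestronglyMeasurable
      exact ((measurable_norm.pow_const _).const_mul κ).mul
        (hφ.measurable.comp (measurable_const.sub measurable_id))
    · by_cases hz : z ∈ closedBall x R
      · rw [indicator_of_mem hz, norm_mul, norm_mul, Real.norm_of_nonneg hκ.le,
          Real.norm_of_nonneg (by positivity : (0:ℝ) ≤ ‖z‖ ^ (-a)), Real.norm_eq_abs]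
        have := mul_le_mul_of_nonneg_left (hM (x - z)) (by positivity : 0 ≤ κ * ‖z‖ ^ (-a))
        linarith
      · rw [hsupp x z hz]; simp [indicator_of_notMem hz]
  have hInt' : ∀ x, Integrable (fun z => κ * ‖x - z‖ ^ (-a) * φ z) := by
    intro x
    have := (hInt x).comp_sub_left x
    simpa using this
  -- global bound
  have hB0 : ∀ x, |Φ x| ≤ κ * M * Cg := by
    intro x
    rw [hrep, ← Real.norm_eq_abs]
    calc _ ≤ ∫ z, κ * M * (closedBall x R).indicator (fun z : Ed d => ‖z‖ ^ (-a)) z := by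
          refine norm_integral_le_of_norm_le ((hG x).1.const_mul (κ * M)) (Eventually.of_forall fun z => ?_)
          by_cases hz : z ∈ closedBall x R
          · rw [indicator_of_mem hz, norm_mul, norm_mul, Real.norm_of_nonneg hκ.le,
              Real.norm_of_nonneg (by positivity : (0:ℝ) ≤ ‖z‖ ^ (-a)), Real.norm_eq_abs]
            have := mul_le_mul_of_nonneg_left (hM (x - z)) (by positivity : 0 ≤ κ * ‖z‖ ^ (-a))
            linarith
          · rw [hsupp x z hz]; simp [indicator_of_notMem hz]
      _ ≤ _ := by
          rw [integral_const_mul]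
          exact mul_le_mul_of_nonneg_left (hG x).2 (by positivity)
  -- global Lipschitz
  have hL0 : ∀ x y, |Φ x - Φ y| ≤ (2 * κ * L * Cg) * ‖x - y‖ := by
    intro x y
    rw [hrep, hrep, ← integral_sub (hInt x) (hInt y), ← Real.norm_eq_abs]
    calc _ ≤ ∫ z, κ * L * ‖x - y‖ * ((closedBall x R).indicator (fun z : Ed d => ‖z‖ ^ (-a)) z +
            (closedBall y R).indicator (fun z : Ed d => ‖z‖ ^ (-a)) z) := by
          refine norm_integral_le_of_norm_le (((hG x).1.add (hG y).1).const_mul _)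
            (Eventually.of_forall fun z => ?_)
          have hk : (0:ℝ) ≤ ‖z‖ ^ (-a) := by positivity
          have hnx : 0 ≤ (closedBall x R).indicator (fun z : Ed d => ‖z‖ ^ (-a)) z :=
            indicator_nonneg (fun z _ => by positivity) z
          have hny : 0 ≤ (closedBall y R).indicator (fun z : Ed d => ‖z‖ ^ (-a)) z :=
            indicator_nonneg (fun z _ => by positivity) z
          by_cases hz : z ∉ closedBall x R ∧ z ∉ closedBall y R
          · rw [hsupp x z hz.1, hsupp y z hz.2, indicator_of_notMem hz.1, indicator_of_notMem hz.2]
            simp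
          · have hsum : ‖z‖ ^ (-a) ≤ (closedBall x R).indicator (fun z : Ed d => ‖z‖ ^ (-a)) z +
                (closedBall y R).indicator (fun z : Ed d => ‖z‖ ^ (-a)) z := by
              by_cases hx : z ∈ closedBall x R
              · rw [indicator_of_mem hx]; linarith
              · have hy : z ∈ closedBall y R := by
                  by_contra hy; exact hz ⟨hx, hy⟩
                rw [indicator_of_mem hy]; linarith
            rw [← mul_sub, norm_mul, norm_mul, Real.norm_of_nonneg hκ.le, Real.norm_of_nonneg hk,
              Real.norm_eq_abs]
            have h1 := hLip (x - z) (y - z)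
            rw [sub_sub_sub_cancel_right] at h1
            calc κ * ‖z‖ ^ (-a) * |φ (x - z) - φ (y - z)| ≤ κ * ‖z‖ ^ (-a) * (L * ‖x - y‖) := by gcongr
              _ = κ * L * ‖x - y‖ * ‖z‖ ^ (-a) := by ring
              _ ≤ _ := by gcongr
      _ ≤ κ * L * ‖x - y‖ * (Cg + Cg) := by
          rw [integral_const_mul, integral_add (hG x).1 (hG y).1]
          have := (hG x).2
          have := (hG y).2
          gcongr
      _ = _ := by ring
  set V := volume.real (closedBall (0 : Ed d) R) with hV
  have hV0 : 0 ≤ V := by positivity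
  have hcint : ∀ c : ℝ, Integrable ((closedBall (0 : Ed d) R).indicator (fun _ : Ed d => c)) := by
    intro c
    rw [integrable_indicator_iff measurableSet_closedBall]
    exact integrableOn_const measure_closedBall_lt_top.ne
  have hcval : ∀ c : ℝ, ∫ z, (closedBall (0 : Ed d) R).indicator (fun _ : Ed d => c) z = V * c := by
    intro c
    rw [integral_indicator measurableSet_closedBall]
    simp [hV]
  -- far bound
  have hBf : ∀ x : Ed d, 4 * R + 2 ≤ ‖x‖ → |Φ x| ≤ V * (κ * ((1 + ‖x‖) / 8) ^ (-a) * M) := by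
    intro x hx
    rw [← hcval, ← Real.norm_eq_abs]
    refine norm_integral_le_of_norm_le (hcint _) (Eventually.of_forall fun z => ?_)
    by_cases hz : z ∈ closedBall (0 : Ed d) R
    · rw [indicator_of_mem hz, norm_mul, norm_mul, Real.norm_of_nonneg hκ.le,
        Real.norm_of_nonneg (by positivity : (0:ℝ) ≤ ‖x - z‖ ^ (-a)), Real.norm_eq_abs]
      rw [mem_closedBall, dist_zero_right] at hz
      have h1 : (1 + ‖x‖) / 8 ≤ ‖x - z‖ := by
        have := norm_sub_norm_le x z
        linarith
      have h2 : ‖x - z‖ ^ (-a) ≤ ((1 + ‖x‖) / 8) ^ (-a) :=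
        Real.rpow_le_rpow_of_nonpos (by positivity) h1 (by linarith)
      have := hM z
      gcongr
    · rw [indicator_of_notMem hz]
      rw [mem_closedBall, dist_zero_right, not_le] at hz
      simp [hR z hz]
  have hLf : ∀ x y : Ed d, 4 * R + 2 ≤ ‖x‖ → ‖x - y‖ ≤ (1 + ‖x‖) / 2 →
      |Φ x - Φ y| ≤ V * (κ * (a * ((1 + ‖x‖) / 8) ^ (-(a + 1)) * ‖x - y‖) * M) := by
    intro x y hx hxy
    rw [← hcval, ← Real.norm_eq_abs]
    simp only [hΦ]
    rw [← integral_sub (hInt' x) (hInt' y)]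
    refine norm_integral_le_of_norm_le (hcint _) (Eventually.of_forall fun z => ?_)
    by_cases hz : z ∈ closedBall (0 : Ed d) R
    · rw [indicator_of_mem hz, ← sub_mul, ← mul_sub, norm_mul, norm_mul, Real.norm_of_nonneg hκ.le,
        Real.norm_eq_abs, Real.norm_eq_abs]
      rw [mem_closedBall, dist_zero_right] at hz
      have h1 : (1 + ‖x‖) / 8 ≤ ‖x - z‖ := by
        have := norm_sub_norm_le x z
        linarith
      have h1' : (1 + ‖x‖) / 8 ≤ ‖y - z‖ := by
        have h3 := norm_sub_norm_le y z
        have h4 := norm_sub_norm_le x y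
        linarith
      have h2 := aux_rpow_lip a ((1 + ‖x‖) / 8) _ _ ha (by positivity) h1 h1'
      have h5 : |‖x - z‖ - ‖y - z‖| ≤ ‖x - y‖ := by
        have := abs_norm_sub_norm_le (x - z) (y - z)
        rwa [sub_sub_sub_cancel_right] at this
      have h6 : |‖x - z‖ ^ (-a) - ‖y - z‖ ^ (-a)| ≤ a * ((1 + ‖x‖) / 8) ^ (-(a + 1)) * ‖x - y‖ :=
        h2.trans (by gcongr)
      have := hM z
      gcongr
    · rw [indicator_of_notMem hz]
      rw [mem_closedBall, dist_zero_right, not_le] at hz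
      simp [hR z hz]
  set T : ℝ := 4 * R + 3 with hT
  have hT0 : 0 < T := by positivity
  have hnear : ∀ x : Ed d, ∀ b : ℝ, 0 < b → ‖x‖ < 4 * R + 2 → 1 ≤ T ^ b * (1 + ‖x‖) ^ (-b) := by
    intro x b hb hx
    rw [Real.rpow_neg (by positivity), ← div_eq_mul_inv, one_le_div (by positivity)]
    exact Real.rpow_le_rpow (by positivity) (by linarith) hb.le
  have hscale : ∀ x : Ed d, ∀ b : ℝ, ((1 + ‖x‖) / 8) ^ (-b) = (8:ℝ) ^ b * (1 + ‖x‖) ^ (-b) := by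
    intro x b
    rw [Real.div_rpow (by positivity) (by norm_num), Real.rpow_neg (by norm_num : (0:ℝ) ≤ 8)]
    field_simp
  set A1 := κ * M * Cg * T ^ a with hA1
  set A2 := V * κ * 8 ^ a * M with hA2
  set B1 := 2 * κ * L * Cg * T ^ (a + 1) with hB1
  set B2 := V * κ * a * 8 ^ (a + 1) * M with hB2
  have hA1' : 0 ≤ A1 := by positivity
  have hA2' : 0 ≤ A2 := by positivity
  have hB1' : 0 ≤ B1 := by positivity
  have hB2' : 0 ≤ B2 := by positivity
  refine ⟨A1 + A2 + B1 + B2, by positivity, fun x => ?_, fun x y hxy => ?_⟩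
  · have hw : 0 ≤ (1 + ‖x‖) ^ (-a) := by positivity
    rcases lt_or_ge ‖x‖ (4 * R + 2) with hx | hx
    · calc |Φ x| ≤ κ * M * Cg * 1 := by rw [mul_one]; exact hB0 x
        _ ≤ κ * M * Cg * (T ^ a * (1 + ‖x‖) ^ (-a)) := by
          have := hnear x a ha hx
          gcongr
        _ = A1 * (1 + ‖x‖) ^ (-a) := by rw [hA1]; ring
        _ ≤ _ := by gcongr; linarith
    · calc |Φ x| ≤ _ := hBf x hx
        _ = A2 * (1 + ‖x‖) ^ (-a) := by rw [hscale, hA2]; ring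
        _ ≤ _ := by gcongr; linarith
  · have hw : 0 ≤ (1 + ‖x‖) ^ (-(a + 1)) := by positivity
    rcases lt_or_ge ‖x‖ (4 * R + 2) with hx | hx
    · calc |Φ x - Φ y| ≤ (2 * κ * L * Cg) * ‖x - y‖ * 1 := by rw [mul_one]; exact hL0 x y
        _ ≤ (2 * κ * L * Cg) * ‖x - y‖ * (T ^ (a + 1) * (1 + ‖x‖) ^ (-(a + 1))) := by
          have := hnear x (a + 1) (by linarith) hx
          gcongr
        _ = B1 * (1 + ‖x‖) ^ (-(a + 1)) * ‖x - y‖ := by rw [hB1]; ring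
        _ ≤ _ := by gcongr; linarith
    · calc |Φ x - Φ y| ≤ _ := hLf x y hx hxy
        _ = B2 * (1 + ‖x‖) ^ (-(a + 1)) * ‖x - y‖ := by rw [hscale, hB2]; ring
        _ ≤ _ := by gcongr; linarith

theorem aux_final (d : ℕ) (hd : 1 ≤ d) (s : ℝ) (hs0 : 0 < s) (hs1 : s < 1) (p : ℝ) (hp : 1 < p)
    (a : ℝ) (ha : 0 < a) (hpa : p * a < d) (Φ : Ed d → ℝ) (C : ℝ) (hC : 0 ≤ C)
    (hA : ∀ x : Ed d, |Φ x| ≤ C * (1 + ‖x‖) ^ (-a))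
    (hB : ∀ x y : Ed d, ‖x - y‖ ≤ (1 + ‖x‖) / 2 →
        |Φ x - Φ y| ≤ C * (1 + ‖x‖) ^ (-(a + 1)) * ‖x - y‖) :
    Continuous (lps d p s Φ) ∧
    ∃ K > (0:ℝ), ∀ x : Ed d, lps d p s Φ x ≤ K * (1 + ‖x‖) ^ (-(p * (a + s))) := by
  have : Nonempty (Fin d) := ⟨⟨0, hd⟩⟩
  have hp0 : 0 < p := by linarith
  have hps : 0 < p * s := by positivity
  have hps1 : 0 < p * (1 - s) := mul_pos hp0 (by linarith)
  obtain ⟨c1, hc1, h1⟩ := aux_pow_ball d hd ((d:ℝ) - p * (1 - s)) (by linarith)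
  obtain ⟨c2, hc2, h2⟩ := aux_pow_tail d hd ((d:ℝ) + p * s) (by linarith)
  obtain ⟨c3, hc3, h3⟩ := aux_pow_ball d hd (p * a) hpa
  -- pointwise estimate from a Lipschitz bound
  have hlip : ∀ (x y : Ed d) (D : ℝ), 0 ≤ D → |Φ x - Φ y| ≤ D * ‖x - y‖ →
      |Φ x - Φ y| ^ p / dist x y ^ ((d:ℝ) + p * s) ≤ D ^ p * ‖x - y‖ ^ (-((d:ℝ) - p * (1 - s))) := by
    intro x y D hD h
    rcases eq_or_ne x y with rfl | hxy
    · simp only [sub_self, abs_zero, Real.zero_rpow hp0.ne', zero_div]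
      positivity
    · have hn : 0 < ‖x - y‖ := norm_pos_iff.mpr (sub_ne_zero.mpr hxy)
      rw [dist_eq_norm]
      calc |Φ x - Φ y| ^ p / ‖x - y‖ ^ ((d:ℝ) + p * s)
          ≤ (D * ‖x - y‖) ^ p / ‖x - y‖ ^ ((d:ℝ) + p * s) := by gcongr
        _ = D ^ p * (‖x - y‖ ^ p * ‖x - y‖ ^ (-((d:ℝ) + p * s))) := by
          rw [Real.mul_rpow hD hn.le, Real.rpow_neg hn.le]; ring
        _ = _ := by
          rw [← Real.rpow_add hn]; congr 2; ring
  have hbd : ∀ (x y : Ed d) (D : ℝ), |Φ x - Φ y| ≤ D →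
      |Φ x - Φ y| ^ p / dist x y ^ ((d:ℝ) + p * s) ≤ D ^ p * ‖x - y‖ ^ (-((d:ℝ) + p * s)) := by
    intro x y D h
    rw [dist_eq_norm, Real.rpow_neg (norm_nonneg _), ← div_eq_mul_inv]
    gcongr
  have hw1 : ∀ x : Ed d, ∀ b : ℝ, 0 ≤ b → (1 + ‖x‖) ^ (-b) ≤ 1 := fun x b hb =>
    Real.rpow_le_one_of_one_le_of_nonpos (by linarith [norm_nonneg x]) (by linarith)
  have hB' : ∀ x y : Ed d, ‖x - y‖ ≤ 1 / 2 → |Φ x - Φ y| ≤ C * ‖x - y‖ := by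
    intro x y hxy
    refine (hB x y (by linarith [norm_nonneg x])).trans ?_
    have := hw1 x (a + 1) (by linarith)
    calc C * (1 + ‖x‖) ^ (-(a + 1)) * ‖x - y‖ ≤ C * 1 * ‖x - y‖ := by gcongr
      _ = _ := by ring
  have hA' : ∀ x y : Ed d, |Φ x - Φ y| ≤ 2 * C := by
    intro x y
    have h1 := abs_sub (Φ x) (Φ y)
    have h2 : ∀ x, |Φ x| ≤ C := fun x => (hA x).trans (by
      have := hw1 x a ha.le
      nlinarith)
    linarith [h2 x, h2 y]
  have hcont : Continuous Φ := by
    rw [continuous_iff_continuousAt]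
    intro x
    rw [ContinuousAt, tendsto_iff_dist_tendsto_zero]
    have hg : Tendsto (fun y : Ed d => C * ‖x - y‖) (𝓝 x) (𝓝 0) := by
      have : Continuous (fun y : Ed d => C * ‖x - y‖) := by fun_prop
      simpa using this.tendsto x
    refine squeeze_zero' (Eventually.of_forall fun y => dist_nonneg) ?_ hg
    filter_upwards [closedBall_mem_nhds x (by norm_num : (0:ℝ) < 1 / 2)] with y hy
    rw [mem_closedBall, dist_comm, dist_eq_norm] at hy
    rw [dist_comm, Real.dist_eq]
    exact hB' x y hy
  constructor
  · have hrep : lps d p s Φ = fun x => ∫ z, |Φ x - Φ (x - z)| ^ p / ‖z‖ ^ ((d:ℝ) + p * s) := by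
      ext x
      rw [lps, ← integral_sub_left_eq_self _ volume x]
      simp [dist_eq_norm]
    rw [hrep]
    obtain ⟨i1, -⟩ := h1 (1 / 2) (by norm_num)
    obtain ⟨i2, -⟩ := h2 (1 / 2) (by norm_num)
    refine continuous_of_dominated ?_ ?_ ((i1.const_mul (C ^ p)).add (i2.const_mul ((2 * C) ^ p))) ?_
    · intro x
      apply Measurable.aestronglyMeasurable
      have : Measurable fun z => Φ x - Φ (x - z) := by
        have : Continuous fun z => Φ x - Φ (x - z) := by fun_prop
        exact this.measurable
      exact ((measurable_norm.comp this).pow_const p).div (measurable_norm.pow_const _)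
    · intro x
      refine Eventually.of_forall fun z => ?_
      rw [Real.norm_of_nonneg (by positivity)]
      by_cases hz : z ∈ closedBall (0 : Ed d) (1 / 2)
      · have hz' : z ∉ (closedBall (0 : Ed d) (1 / 2))ᶜ := fun h => h hz
        simp only [Pi.add_apply, indicator_of_mem hz, indicator_of_notMem hz', mul_zero, add_zero]
        have hzn : ‖x - (x - z)‖ ≤ 1 / 2 := by simpa using hz
        have := hlip x (x - z) C hC (hB' x (x - z) hzn)
        simpa [dist_eq_norm] using this
      · have hz' : z ∈ (closedBall (0 : Ed d) (1 / 2))ᶜ := hz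
        simp only [Pi.add_apply, indicator_of_notMem hz, indicator_of_mem hz', mul_zero, zero_add]
        have := hbd x (x - z) (2 * C) (hA' x (x - z))
        simpa [dist_eq_norm] using this
    · refine Eventually.of_forall fun z => ?_
      apply Continuous.div_const
      have : Continuous fun x => |Φ x - Φ (x - z)| := by fun_prop
      exact this.rpow_const (fun _ => Or.inr hp0.le)
  · set K1 := C ^ p * c1 / 2 ^ (p * (1 - s)) with hK1
    set K2 := (2 * C) ^ p * c2 / 2 ^ (-(p * s)) with hK2
    set K3 := (2 * C) ^ p * c3 / 2 ^ (-((d:ℝ) + p * s)) with hK3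
    have hK1' : 0 ≤ K1 := by positivity
    have hK2' : 0 ≤ K2 := by positivity
    have hK3' : 0 ≤ K3 := by positivity
    refine ⟨K1 + K2 + K3 + 1, by positivity, fun x => ?_⟩
    set W := 1 + ‖x‖ with hW
    have hW0 : 0 < W := by positivity
    obtain ⟨i1, v1⟩ := h1 (W / 2) (by positivity)
    obtain ⟨i2, v2⟩ := h2 (W / 2) (by positivity)
    obtain ⟨i3, v3⟩ := h3 W hW0
    set g1 := (closedBall (0 : Ed d) (W / 2)).indicator (fun z => ‖z‖ ^ (-((d:ℝ) - p * (1 - s)))) with hg1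
    set g2 := (closedBall (0 : Ed d) (W / 2))ᶜ.indicator (fun z => ‖z‖ ^ (-((d:ℝ) + p * s))) with hg2
    set g3 := (closedBall (0 : Ed d) W).indicator (fun z => ‖z‖ ^ (-(p * a))) with hg3
    have n1 : ∀ z, 0 ≤ g1 z := fun z => indicator_nonneg (fun z _ => by positivity) z
    have n2 : ∀ z, 0 ≤ g2 z := fun z => indicator_nonneg (fun z _ => by positivity) z
    have n3 : ∀ z, 0 ≤ g3 z := fun z => indicator_nonneg (fun z _ => by positivity) z
    have j1 := (i1.comp_sub_left x).const_mul ((C * W ^ (-(a + 1))) ^ p)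
    have j2 := (i2.comp_sub_left x).const_mul ((2 * C * W ^ (-a)) ^ p)
    have j3 := i3.const_mul ((2 * C) ^ p * (W / 2) ^ (-((d:ℝ) + p * s)))
    have hpt : ∀ y : Ed d, y ≠ 0 → |Φ x - Φ y| ^ p / dist x y ^ ((d:ℝ) + p * s) ≤
        (C * W ^ (-(a + 1))) ^ p * g1 (x - y) + (2 * C * W ^ (-a)) ^ p * g2 (x - y) +
        (2 * C) ^ p * (W / 2) ^ (-((d:ℝ) + p * s)) * g3 y := by
      intro y hy
      have m1 : 0 ≤ (C * W ^ (-(a + 1))) ^ p * g1 (x - y) := mul_nonneg (by positivity) (n1 _)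
      have m2 : 0 ≤ (2 * C * W ^ (-a)) ^ p * g2 (x - y) := mul_nonneg (by positivity) (n2 _)
      have m3 : 0 ≤ (2 * C) ^ p * (W / 2) ^ (-((d:ℝ) + p * s)) * g3 y :=
        mul_nonneg (by positivity) (n3 _)
      rcases le_or_gt ‖x - y‖ (W / 2) with hxy | hxy
      · have e1 : g1 (x - y) = ‖x - y‖ ^ (-((d:ℝ) - p * (1 - s))) :=
          indicator_of_mem (by simpa using hxy) _
        have := hlip x y _ (by positivity) (hB x y hxy)
        rw [← e1] at this
        linarith
      · have e2 : g2 (x - y) = ‖x - y‖ ^ (-((d:ℝ) + p * s)) :=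
          indicator_of_mem (by simpa using hxy) _
        have hd0 : |Φ x - Φ y| ≤ C * W ^ (-a) + C * (1 + ‖y‖) ^ (-a) :=
          (abs_sub _ _).trans (add_le_add (hA x) (hA y))
        rcases le_or_gt W (1 + ‖y‖) with hyW | hyW
        · have : (1 + ‖y‖) ^ (-a) ≤ W ^ (-a) := Real.rpow_le_rpow_of_nonpos hW0 hyW (by linarith)
          have h5 : |Φ x - Φ y| ≤ 2 * C * W ^ (-a) := by nlinarith
          have := hbd x y _ h5
          rw [← e2] at this
          linarith
        · have hyn : 0 < ‖y‖ := norm_pos_iff.mpr hy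
          have q1 : W ^ (-a) ≤ ‖y‖ ^ (-a) :=
            Real.rpow_le_rpow_of_nonpos hyn (by linarith) (by linarith)
          have q2 : (1 + ‖y‖) ^ (-a) ≤ ‖y‖ ^ (-a) :=
            Real.rpow_le_rpow_of_nonpos hyn (by linarith) (by linarith)
          have e3 : g3 y = ‖y‖ ^ (-(p * a)) :=
            indicator_of_mem (by simp only [mem_closedBall, dist_zero_right]; linarith) _
          have h5 : |Φ x - Φ y| ≤ 2 * C * ‖y‖ ^ (-a) := by nlinarith
          have h6 := hbd x y _ h5
          have h7 : ‖x - y‖ ^ (-((d:ℝ) + p * s)) ≤ (W / 2) ^ (-((d:ℝ) + p * s)) :=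
            Real.rpow_le_rpow_of_nonpos (by positivity) hxy.le (by
              have : (0:ℝ) ≤ d := by positivity
              linarith)
          have h8 : (2 * C * ‖y‖ ^ (-a)) ^ p = (2 * C) ^ p * g3 y := by
            rw [e3, Real.mul_rpow (by positivity) (by positivity), ← Real.rpow_mul hyn.le]
            congr 2; ring
          have h9 : (2 * C * ‖y‖ ^ (-a)) ^ p * ‖x - y‖ ^ (-((d:ℝ) + p * s)) ≤
              (2 * C) ^ p * (W / 2) ^ (-((d:ℝ) + p * s)) * g3 y := by
            rw [h8]
            have := n3 y
            calc _ ≤ (2 * C) ^ p * g3 y * (W / 2) ^ (-((d:ℝ) + p * s)) := by gcongr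
              _ = _ := by ring
          linarith
    have hae : ∀ᵐ y : Ed d, y ≠ 0 := by
      simp [ae_iff]
    have hle : lps d p s Φ x ≤ ∫ y, ((C * W ^ (-(a + 1))) ^ p * g1 (x - y) +
        (2 * C * W ^ (-a)) ^ p * g2 (x - y) +
        (2 * C) ^ p * (W / 2) ^ (-((d:ℝ) + p * s)) * g3 y) := by
      refine integral_mono_of_nonneg (Eventually.of_forall fun y => ?_) ((j1.add j2).add j3) ?_
      · show 0 ≤ |Φ x - Φ y| ^ p / dist x y ^ ((d:ℝ) + p * s)
        positivity
      · filter_upwards [hae] with y hy using hpt y hy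
    have hval : ∫ y, ((C * W ^ (-(a + 1))) ^ p * g1 (x - y) +
        (2 * C * W ^ (-a)) ^ p * g2 (x - y) +
        (2 * C) ^ p * (W / 2) ^ (-((d:ℝ) + p * s)) * g3 y) =
        (K1 + K2 + K3) * W ^ (-(p * (a + s))) := by
      have j12 : Integrable (fun y => (C * W ^ (-(a + 1))) ^ p * g1 (x - y) +
        (2 * C * W ^ (-a)) ^ p * g2 (x - y)) := j1.add j2
      rw [integral_add j12 j3, integral_add j1 j2, integral_const_mul, integral_const_mul,
        integral_const_mul, integral_sub_left_eq_self g1 volume x,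
        integral_sub_left_eq_self g2 volume x, v1, v2, v3]
      rw [Real.mul_rpow hC (by positivity), Real.mul_rpow (by positivity : 0 ≤ 2 * C) (by positivity),
        ← Real.rpow_mul hW0.le, ← Real.rpow_mul hW0.le, Real.div_rpow hW0.le (by norm_num),
        Real.div_rpow hW0.le (by norm_num), Real.div_rpow hW0.le (by norm_num)]
      have w1 : W ^ (-(a + 1) * p) * W ^ ((d:ℝ) - ((d:ℝ) - p * (1 - s))) = W ^ (-(p * (a + s))) := by
        rw [← Real.rpow_add hW0]; congr 1; ring
      have w2 : W ^ (-a * p) * W ^ ((d:ℝ) - ((d:ℝ) + p * s)) = W ^ (-(p * (a + s))) := by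
        rw [← Real.rpow_add hW0]; congr 1; ring
      have w3 : W ^ (-((d:ℝ) + p * s)) * W ^ ((d:ℝ) - p * a) = W ^ (-(p * (a + s))) := by
        rw [← Real.rpow_add hW0]; congr 1; ring
      have u1 : (d:ℝ) - ((d:ℝ) - p * (1 - s)) = p * (1 - s) := by ring
      have u2 : (d:ℝ) - ((d:ℝ) + p * s) = -(p * s) := by ring
      rw [add_mul, add_mul]
      congr 1
      · congr 1
        · rw [← w1, hK1, u1]; ring
        · rw [← w2, hK2, u2]; ring
      · rw [← w3, hK3]; ring
    rw [hval] at hle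
    have : 0 ≤ W ^ (-(p * (a + s))) := by positivity
    linarith

theorem stmt11 (d : ℕ) (hd : 1 ≤ d) (s : ℝ) (hs : s ∈ Set.Ioo (0:ℝ) 1)
    (hds : 2 * s < (d:ℝ)) (κ : ℝ) (hκ : 0 < κ)
    (p : ℝ) (hp1 : 1 < p) (hp2 : p < (d:ℝ) / ((d:ℝ) - 2 * s))
    (φ : Ed d → ℝ) (hφ : ContDiff ℝ (⊤ : ℕ∞) φ) (hφc : HasCompactSupport φ) :
    Continuous (lps d p s (riesz d s κ φ)) ∧
    ∃ K > (0:ℝ), ∀ x : Ed d,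
      lps d p s (riesz d s κ φ) x ≤ K * (1 + ‖x‖) ^ (-(p * ((d:ℝ) - s))) := by
  have ha : 0 < (d:ℝ) - 2 * s := by linarith
  obtain ⟨L, hL⟩ := ContDiff.lipschitzWith_of_hasCompactSupport hφc hφ (by simp)
  obtain ⟨C, hC, hA, hB⟩ := aux_riesz d hd ((d:ℝ) - 2 * s) ha (by linarith [hs.1]) κ hκ φ
    hφ.continuous hφc L L.2 (fun x y => by
      have := hL.dist_le_mul x y
      rwa [Real.dist_eq, dist_eq_norm] at this)
  have h := aux_final d hd s hs.1 hs.2 p hp1 ((d:ℝ) - 2 * s) ha ((lt_div_iff₀ ha).mp hp2)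
    (riesz d s κ φ) C hC hA hB
  rwa [show (d:ℝ) - 2 * s + s = (d:ℝ) - s by ring] at h
end
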